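/- arXiv:1904.10371 — 3 statements merged into one kernel-verified Lean document; each statement's English description precedes it below -/
import Mathlib

section
/- Under hypotheses (g1), (g2), (h1) and (hg), the constrained one-dimensional radial functional F attains its minimum on 𝒲_μ: there exists ū ∈ 𝒲_μ such that F(ū) ≤ F(u) for every u ∈ 𝒲_μ. -/
open MeasureTheory Set Filter
open scoped ENNReal

noncomputable section

/-- The space `𝒲` of functions `u` on `(0,R]`, locally absolutely continuous on `(0,R]`
(encoded by the representation `u r = -∫_r^R u'`), with `u R = 0` and
`r ↦ r^(N-1) |u' r|` in `L¹(0,R)`; `u'` is the a.e. derivative of `u`. -/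
structure RadW (N : ℕ) (R : ℝ) where
  u : ℝ → ℝ
  u' : ℝ → ℝ
  integ : IntegrableOn (fun r : ℝ => r ^ (N - 1) * |u' r|) (Ioc 0 R)
  rep : ∀ r ∈ Ioc (0:ℝ) R, u r = -∫ ρ in Ioc r R, u' ρ

/-- Membership in `𝒲_μ`: the gradient constraint `|u'(r)| ≤ μ(r)` a.e. on `(0,R)`. -/
def memWmu (N : ℕ) (R : ℝ) (μ : ℝ → ℝ≥0∞) (u : RadW N R) : Prop :=
  ∀ᵐ r ∂(volume.restrict (Ioc (0:ℝ) R)), ENNReal.ofReal |u.u' r| ≤ μ r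

/-- The extended-real integral `∫ f = ∫⁻ f⁺ - ∫⁻ f⁻`, with values in `[-∞,+∞]`. -/
def ERInt (f : ℝ → ℝ) (s : Set ℝ) : EReal :=
  ((∫⁻ x in s, ENNReal.ofReal (f x) : ℝ≥0∞) : EReal)
    - ((∫⁻ x in s, ENNReal.ofReal (-f x) : ℝ≥0∞) : EReal)

/-- The radial functional `F(u) = ∫₀^R r^(N-1) [g(|u'(r)|) + h(u(r))] dr`. -/
def Fcon (N : ℕ) (R : ℝ) (g h : ℝ → ℝ) (u : RadW N R) : EReal :=
  ERInt (fun r : ℝ => r ^ (N - 1) * (g |u.u' r| + h (u.u r))) (Ioc 0 R)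

/-- The constant `M := lim_{s→∞} g(s)/s ∈ (-∞,+∞]` (realized as a liminf in `[-∞,+∞]`;
the limit exists by convexity). -/
def MconstE (g : ℝ → ℝ) : EReal :=
  Filter.liminf (fun s : ℝ => ((g s / s : ℝ) : EReal)) Filter.atTop

/-- The right derivative `h'₊(0)` of a convex function `h` at `0`,
`h'₊(0) = inf_{t > 0} (h(t) - h(0))/t`. -/
def rightD (h : ℝ → ℝ) : ℝ := sInf ((fun t : ℝ => (h t - h 0) / t) '' Ioi 0)

/-- The left derivative `h'₋(0)` of a convex function `h` at `0`,
`h'₋(0) = sup_{t < 0} (h(t) - h(0))/t`. -/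
def leftD (h : ℝ → ℝ) : ℝ := sSup ((fun t : ℝ => (h t - h 0) / t) '' Iio 0)

/-!
By the symmetry `u ↦ -u` we may assume `h'₋(0) ≤ 0`. Then `h` is either nonincreasing or has a
minimizer `c ≥ 0`, in which case `h` is first replaced by the nonincreasing convex function
`h (min · c)`. For nonincreasing `h`, replacing `u'` by `-min |u'| σ` does not raise the energy as
soon as `g` has slope at least `l R / N` beyond `σ`, where `-l` bounds the slope of `h` on `[0, ∞)`
from below: by Fubini the increase of the `h`-term is at most
`l (R / N) ∫ r ^ (N - 1) (|u'| - σ)⁺`. It remains to minimize over the slopes `-u'` with values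
between `0` and `min σ μ`. They form a bounded closed convex subset of `L²`, on which the functional
is convex and continuous, so that a minimizer exists. Cutting it off at height `c`, that is, setting
its slope to zero near the origin, finally leads back from `h (min · c)` to `h`.
-/

section HilbertSpace

variable {E : Type*} [NormedAddCommGroup E] [InnerProductSpace ℝ E] [CompleteSpace E]

theorem exists_mem_norm_sub_sq_le {S : Set E} (hne : S.Nonempty) (hclosed : IsClosed S)
    (hconv : Convex ℝ S) : ∃ v ∈ S, ∀ w ∈ S, ‖w - v‖ ^ 2 ≤ ‖w‖ ^ 2 - ‖v‖ ^ 2 := by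
  obtain ⟨v, hv, hmin⟩ :=
    exists_norm_eq_iInf_of_complete_convex hne hclosed.isComplete hconv (0 : E)
  refine ⟨v, hv, fun w hw => ?_⟩
  have hvar := (norm_eq_iInf_iff_real_inner_le_zero hconv hv).1 hmin w hw
  rw [zero_sub, inner_neg_left, inner_sub_right, real_inner_self_eq_norm_sq] at hvar
  rw [norm_sub_sq_real, real_inner_comm]
  linarith

-- The points of least norm of the sets `S n` form a Cauchy sequence.
theorem nonempty_iInter_of_antitone_of_convex {S : ℕ → Set E} (hanti : Antitone S)
    (hne : ∀ n, (S n).Nonempty) (hclosed : ∀ n, IsClosed (S n)) (hconv : ∀ n, Convex ℝ (S n))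
    (hbdd : Bornology.IsBounded (S 0)) : (⋂ n, S n).Nonempty := by
  choose v hv hproj using fun n => exists_mem_norm_sub_sq_le (hne n) (hclosed n) (hconv n)
  have hstep {n m : ℕ} (hnm : n ≤ m) : ‖v m - v n‖ ^ 2 ≤ ‖v m‖ ^ 2 - ‖v n‖ ^ 2 :=
    hproj n (v m) (hanti hnm (hv m))
  have hmono : Monotone fun n => ‖v n‖ ^ 2 := fun n m hnm =>
    sub_nonneg.1 ((sq_nonneg _).trans (hstep hnm))
  obtain ⟨B, hB⟩ := hbdd.exists_norm_le
  have hbddAbove : BddAbove (range fun n => ‖v n‖ ^ 2) := by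
    refine ⟨B ^ 2, ?_⟩
    rintro _ ⟨n, rfl⟩
    exact pow_le_pow_left₀ (norm_nonneg _) (hB _ (hanti n.zero_le (hv n))) 2
  have hcauchySq := (tendsto_atTop_ciSup hmono hbddAbove).cauchySeq
  have hcauchy : CauchySeq v := by
    rw [Metric.cauchySeq_iff'] at hcauchySq ⊢
    intro ε hε
    obtain ⟨n₀, hn₀⟩ := hcauchySq (ε ^ 2) (by positivity)
    refine ⟨n₀, fun n hn => lt_of_pow_lt_pow_left₀ 2 hε.le ?_⟩
    rw [dist_eq_norm]
    exact ((hstep hn).trans (le_abs_self _)).trans_lt (hn₀ n hn)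
  obtain ⟨w, hw⟩ := cauchySeq_tendsto_of_complete hcauchy
  refine ⟨w, mem_iInter.2 fun n => (hclosed n).mem_of_tendsto hw ?_⟩
  filter_upwards [eventually_ge_atTop n] with m hm using hanti hm (hv m)

theorem exists_isMinOn_of_convexOn_of_lowerSemicontinuousOn {K : Set E} {J : E → ℝ}
    (hne : K.Nonempty) (hclosed : IsClosed K) (hbdd : Bornology.IsBounded K)
    (hconv : ConvexOn ℝ K J) (hlsc : LowerSemicontinuousOn J K) : ∃ v ∈ K, IsMinOn J K v := by
  have hsublevel (c : ℝ) : IsClosed {v ∈ K | J v ≤ c} := by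
    obtain ⟨V, hV, hKV⟩ := lowerSemicontinuousOn_iff_preimage_Iic.1 hlsc c
    exact (hKV ▸ hclosed.inter hV : IsClosed (K ∩ J ⁻¹' Iic c))
  have hcantor {c : ℕ → ℝ} (hc : Antitone c) (hcne : ∀ n, ∃ v ∈ K, J v ≤ c n) :
      ∃ v ∈ K, ∀ n, J v ≤ c n := by
    obtain ⟨v, hv⟩ := nonempty_iInter_of_antitone_of_convex (S := fun n => {v ∈ K | J v ≤ c n})
      (fun m n hmn v hv => ⟨hv.1, hv.2.trans (hc hmn)⟩) hcne (fun n => hsublevel _)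
      (fun n => hconv.convex_le _) (hbdd.subset fun v hv => hv.1)
    have hv := mem_iInter.1 hv
    exact ⟨v, (hv 0).1, fun n => (hv n).2⟩
  have hbelow : BddBelow (J '' K) := by
    by_contra hunb
    obtain ⟨v, -, hv⟩ := hcantor (c := fun n => -(n : ℝ))
      (fun m n hmn => neg_le_neg (Nat.cast_le.2 hmn)) fun n => by
        obtain ⟨_, ⟨v, hvK, rfl⟩, hv⟩ := not_bddBelow_iff.1 hunb (-n)
        exact ⟨v, hvK, hv.le⟩
    obtain ⟨n, hn⟩ := exists_nat_gt (-J v)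
    linarith [hv n]
  obtain ⟨c, hc, hlim, hmem⟩ := exists_seq_tendsto_sInf (hne.image J) hbelow
  obtain ⟨v, hvK, hv⟩ := hcantor hc fun n => by
    obtain ⟨w, hw, hwc⟩ := hmem n
    exact ⟨w, hw, hwc.le⟩
  exact ⟨v, hvK, fun w hw =>
    (ge_of_tendsto' hlim hv).trans (csInf_le hbelow (mem_image_of_mem J hw))⟩

end HilbertSpace

section LpSelections

variable {α F : Type*} [MeasurableSpace α] [NormedAddCommGroup F] {p : ℝ≥0∞} {ν : Measure α}

/-- The elements of `Lp` that are almost everywhere selections of the set-valued map `Φ`; this is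
how pointwise constraints on the slope enter the minimization. -/
def LpSelections (Φ : α → Set F) (p : ℝ≥0∞) (ν : Measure α) : Set (Lp F p ν) :=
  {v | ∀ᵐ x ∂ν, v x ∈ Φ x}

variable {Φ : α → Set F}

theorem ae_mem_of_mem_lpSelections {v : Lp F p ν} (hv : v ∈ LpSelections Φ p ν) :
    ∀ᵐ x ∂ν, v x ∈ Φ x :=
  hv

theorem isClosed_lpSelections [Fact (1 ≤ p)] (hΦ : ∀ x, IsClosed (Φ x)) :
    IsClosed (LpSelections Φ p ν) := by
  refine IsSeqClosed.isClosed fun f v hf hlim => ?_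
  obtain ⟨ns, -, hae⟩ := (tendstoInMeasure_of_tendsto_Lp hlim).exists_seq_tendsto_ae
  filter_upwards [ae_all_iff.2 hf, hae] with x hfx hx
  exact (hΦ x).mem_of_tendsto hx (Eventually.of_forall fun k => hfx (ns k))

theorem isBounded_lpSelections [Fact (1 ≤ p)] [IsFiniteMeasure ν] {σ : ℝ} (hσ : 0 ≤ σ)
    (hΦ : ∀ x, ∀ y ∈ Φ x, ‖y‖ ≤ σ) : Bornology.IsBounded (LpSelections Φ p ν) :=
  isBounded_iff_forall_norm_le.2 ⟨_, fun _ hv =>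
    Lp.norm_le_of_ae_bound hσ ((ae_mem_of_mem_lpSelections hv).mono fun x => hΦ x _)⟩

theorem coeFn_smul_add_smul [NormedSpace ℝ F] (s t : ℝ) (v w : Lp F p ν) :
    ⇑(s • v + t • w) =ᵐ[ν] fun x => s • v x + t • w x := by
  filter_upwards [Lp.coeFn_add (s • v) (t • w), Lp.coeFn_smul s v, Lp.coeFn_smul t w]
    with x hadd hs ht
  rw [hadd, Pi.add_apply, hs, ht, Pi.smul_apply, Pi.smul_apply]

theorem convex_lpSelections [NormedSpace ℝ F] (hΦ : ∀ x, Convex ℝ (Φ x)) :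
    Convex ℝ (LpSelections Φ p ν) := by
  intro v hv w hw s t hs ht hst
  filter_upwards [hv, hw, coeFn_smul_add_smul s t v w] with x hvx hwx hx
  exact hx ▸ hΦ x hvx hwx hs ht hst

end LpSelections

/-- The function on `(-∞, b]` that vanishes at `b` and has slope `-v`. -/
def tailIntegral (b : ℝ) (v : ℝ → ℝ) (r : ℝ) : ℝ := ∫ ρ in Ioc r b, v ρ

/-- The functional `v ↦ ∫ₐᵇ w(r) [G(v(r)) + h(u(r))] dr`, where `u` is the tail integral of `v`. -/
def tailEnergy (a b : ℝ) (w G h v : ℝ → ℝ) : ℝ :=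
  ∫ r in Ioc a b, w r * (G (v r) + h (tailIntegral b v r))

section TailIntegral

variable {a b r σ : ℝ} {v v' : ℝ → ℝ}

theorem ae_restrict_Ioc_of_le {P : ℝ → Prop} (hr : a ≤ r)
    (hP : ∀ᵐ x ∂volume.restrict (Ioc a b), P x) : ∀ᵐ x ∂volume.restrict (Ioc r b), P x :=
  ae_restrict_of_ae_restrict_of_subset (Ioc_subset_Ioc_left hr) hP

theorem tailIntegral_congr_ae (hv : v =ᵐ[volume.restrict (Ioc a b)] v') (hr : a ≤ r) :
    tailIntegral b v r = tailIntegral b v' r :=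
  integral_congr_ae (ae_restrict_Ioc_of_le hr hv)

theorem abs_tailIntegral_le (hσ : 0 ≤ σ) (hv : ∀ᵐ x ∂volume.restrict (Ioc a b), |v x| ≤ σ)
    (hr : r ∈ Icc a b) : |tailIntegral b v r| ≤ σ * (b - a) := by
  have hbound : |tailIntegral b v r| ≤ ∫ _ in Ioc r b, σ :=
    norm_integral_le_of_norm_le (f := v) (integrable_const σ) (ae_restrict_Ioc_of_le hr.1 hv)
  have hlen : ∫ _ in Ioc r b, σ = σ * (b - r) := by simp [hr.2, mul_comm]
  exact (hbound.trans_eq hlen).trans (mul_le_mul_of_nonneg_left (sub_le_sub_left hr.1 b) hσ)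

theorem continuousOn_tailIntegral (hab : a ≤ b) (hv : IntegrableOn v (Ioc a b)) :
    ContinuousOn (tailIntegral b v) (Icc a b) := by
  have hcont := intervalIntegral.continuousOn_primitive_interval_left (f := v) (μ := volume)
    (a := a) (b := b) (by rwa [uIcc_of_le hab, integrableOn_Icc_iff_integrableOn_Ioc])
  rw [uIcc_of_le hab] at hcont
  exact hcont.congr fun r hr => (intervalIntegral.integral_of_le hr.2).symm

theorem tailIntegral_mul_add_mul (hv : IntegrableOn v (Ioc a b)) (hv' : IntegrableOn v' (Ioc a b))
    (hr : a ≤ r) (s t : ℝ) :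
    tailIntegral b (fun x => s * v x + t * v' x) r
      = s * tailIntegral b v r + t * tailIntegral b v' r := by
  have hsub : Ioc r b ⊆ Ioc a b := Ioc_subset_Ioc_left hr
  simp only [tailIntegral]
  rw [integral_add ((hv.mono_set hsub).const_mul s) ((hv'.mono_set hsub).const_mul t),
    integral_const_mul, integral_const_mul]

theorem tendsto_tailIntegral {f : ℕ → ℝ → ℝ}
    (hmeas : ∀ k, AEStronglyMeasurable (f k) (volume.restrict (Ioc a b)))
    (hbound : ∀ᶠ k in atTop, ∀ᵐ x ∂volume.restrict (Ioc a b), |f k x| ≤ σ)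
    (hlim : ∀ᵐ x ∂volume.restrict (Ioc a b), Tendsto (fun k => f k x) atTop (nhds (v x)))
    (hr : a ≤ r) :
    Tendsto (fun k => tailIntegral b (f k) r) atTop (nhds (tailIntegral b v r)) :=
  tendsto_integral_filter_of_dominated_convergence (fun _ => σ)
    (Eventually.of_forall fun k =>
      (hmeas k).mono_measure (Measure.restrict_mono (Ioc_subset_Ioc_left hr) le_rfl))
    (hbound.mono fun _ hk => ae_restrict_Ioc_of_le hr hk) (integrable_const σ)
    (ae_restrict_Ioc_of_le hr hlim)

theorem antitoneOn_tailIntegral (hv : IntegrableOn v (Ioc a b))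
    (hv₀ : ∀ᵐ x ∂volume.restrict (Ioc a b), 0 ≤ v x) : AntitoneOn (tailIntegral b v) (Ici a) :=
  fun _ hr _ _ hrs => setIntegral_mono_set (hv.mono_set (Ioc_subset_Ioc_left hr))
    (ae_restrict_Ioc_of_le hr hv₀) (Ioc_subset_Ioc_left hrs).eventuallyLE

theorem tailIntegral_indicator_Ioi (c : ℝ) :
    tailIntegral b ((Ioi c).indicator v) r = tailIntegral b v (max r c) := by
  rw [tailIntegral, setIntegral_indicator measurableSet_Ioi, Ioc_inter_Ioi, tailIntegral]

end TailIntegral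

section TailEnergy

variable {a b σ : ℝ} {w G h v v' : ℝ → ℝ}

theorem tailEnergy_congr_ae (hv : v =ᵐ[volume.restrict (Ioc a b)] v') :
    tailEnergy a b w G h v = tailEnergy a b w G h v' := by
  refine integral_congr_ae ?_
  filter_upwards [hv, ae_restrict_mem measurableSet_Ioc] with r hvr hr
  rw [hvr, tailIntegral_congr_ae hv hr.1.le]

theorem aestronglyMeasurable_tailEnergy_integrand (hab : a ≤ b) (hG : Continuous G)
    (hh : Continuous h) (hw : AEStronglyMeasurable w (volume.restrict (Ioc a b)))
    (hv : IntegrableOn v (Ioc a b)) :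
    AEStronglyMeasurable (fun r => w r * (G (v r) + h (tailIntegral b v r)))
      (volume.restrict (Ioc a b)) := by
  have htail : AEStronglyMeasurable (tailIntegral b v) (volume.restrict (Ioc a b)) :=
    ((continuousOn_tailIntegral hab hv).mono Ioc_subset_Icc_self).aestronglyMeasurable
      measurableSet_Ioc
  exact hw.mul ((hG.comp_aestronglyMeasurable hv.1).add (hh.comp_aestronglyMeasurable htail))

theorem exists_norm_tailEnergy_integrand_le (a b : ℝ) (w : ℝ → ℝ) (hG : Continuous G)
    (hh : Continuous h) (hσ : 0 ≤ σ) :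
    ∃ C : ℝ, ∀ v : ℝ → ℝ, (∀ᵐ x ∂volume.restrict (Ioc a b), |v x| ≤ σ) →
      ∀ᵐ r ∂volume.restrict (Ioc a b), ‖w r * (G (v r) + h (tailIntegral b v r))‖ ≤ |w r| * C := by
  obtain ⟨C₁, hC₁⟩ := (isCompact_closedBall (0 : ℝ) σ).exists_bound_of_continuousOn hG.continuousOn
  obtain ⟨C₂, hC₂⟩ := (isCompact_closedBall (0 : ℝ) (σ * (b - a))).exists_bound_of_continuousOn
    hh.continuousOn
  refine ⟨C₁ + C₂, fun v hv => ?_⟩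
  filter_upwards [hv, ae_restrict_mem measurableSet_Ioc] with r hvr hr
  rw [norm_mul]
  refine mul_le_mul_of_nonneg_left (norm_add_le_of_le (hC₁ _ ?_) (hC₂ _ ?_)) (norm_nonneg _)
  · exact mem_closedBall_zero_iff.2 hvr
  · exact mem_closedBall_zero_iff.2 (abs_tailIntegral_le hσ hv (Ioc_subset_Icc_self hr))

theorem integrableOn_tailEnergy_integrand (hab : a ≤ b) (hG : Continuous G) (hh : Continuous h)
    (hw : IntegrableOn w (Ioc a b)) (hσ : 0 ≤ σ)
    (hmeas : AEStronglyMeasurable v (volume.restrict (Ioc a b)))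
    (hv : ∀ᵐ x ∂volume.restrict (Ioc a b), |v x| ≤ σ) :
    IntegrableOn (fun r => w r * (G (v r) + h (tailIntegral b v r))) (Ioc a b) := by
  obtain ⟨C, hC⟩ := exists_norm_tailEnergy_integrand_le a b w hG hh hσ
  exact Integrable.mono' (hw.abs.mul_const C)
    (aestronglyMeasurable_tailEnergy_integrand hab hG hh hw.1 (Integrable.of_bound hmeas σ hv))
    (hC v hv)

theorem tendsto_tailEnergy {f : ℕ → ℝ → ℝ} (hab : a ≤ b) (hG : Continuous G) (hh : Continuous h)
    (hw : IntegrableOn w (Ioc a b)) (hσ : 0 ≤ σ)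
    (hmeas : ∀ k, AEStronglyMeasurable (f k) (volume.restrict (Ioc a b)))
    (hbound : ∀ᶠ k in atTop, ∀ᵐ x ∂volume.restrict (Ioc a b), |f k x| ≤ σ)
    (hlim : ∀ᵐ x ∂volume.restrict (Ioc a b), Tendsto (fun k => f k x) atTop (nhds (v x))) :
    Tendsto (fun k => tailEnergy a b w G h (f k)) atTop (nhds (tailEnergy a b w G h v)) := by
  obtain ⟨C, hC⟩ := exists_norm_tailEnergy_integrand_le a b w hG hh hσ
  refine tendsto_integral_filter_of_dominated_convergence (fun r => |w r| * C) ?_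
    (hbound.mono fun k hk => hC _ hk) (hw.abs.mul_const C) ?_
  · filter_upwards [hbound] with k hk
    exact aestronglyMeasurable_tailEnergy_integrand hab hG hh hw.1
      (Integrable.of_bound (hmeas k) σ hk)
  · filter_upwards [hlim, ae_restrict_mem measurableSet_Ioc] with r hr hrab
    exact (((hG.tendsto _).comp hr).add ((hh.tendsto _).comp
      (tendsto_tailIntegral hmeas hbound hlim hrab.1.le))).const_mul _

theorem tailEnergy_smul_add_smul_le (hab : a ≤ b) (hG : ConvexOn ℝ univ G)
    (hh : ConvexOn ℝ univ h) (hw : IntegrableOn w (Ioc a b)) (hw₀ : ∀ r ∈ Ioc a b, 0 ≤ w r)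
    (hσ : 0 ≤ σ)
    (hmeas : AEStronglyMeasurable v (volume.restrict (Ioc a b)))
    (hv : ∀ᵐ x ∂volume.restrict (Ioc a b), |v x| ≤ σ)
    (hmeas' : AEStronglyMeasurable v' (volume.restrict (Ioc a b)))
    (hv' : ∀ᵐ x ∂volume.restrict (Ioc a b), |v' x| ≤ σ)
    {s t : ℝ} (hs : 0 ≤ s) (ht : 0 ≤ t) (hst : s + t = 1) :
    tailEnergy a b w G h (fun x => s • v x + t • v' x)
      ≤ s • tailEnergy a b w G h v + t • tailEnergy a b w G h v' := by
  have hcomb : ∀ᵐ x ∂volume.restrict (Ioc a b), |s • v x + t • v' x| ≤ σ := by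
    filter_upwards [hv, hv'] with x hx hx'
    have hball := convex_closedBall (0 : ℝ) σ (mem_closedBall_zero_iff.2 hx)
      (mem_closedBall_zero_iff.2 hx') hs ht hst
    exact mem_closedBall_zero_iff.1 hball
  have hGc : Continuous G := continuousOn_univ.1 (hG.continuousOn isOpen_univ)
  have hhc : Continuous h := continuousOn_univ.1 (hh.continuousOn isOpen_univ)
  have hint := integrableOn_tailEnergy_integrand hab hGc hhc hw hσ hmeas hv
  have hint' := integrableOn_tailEnergy_integrand hab hGc hhc hw hσ hmeas' hv'
  simp only [tailEnergy, smul_eq_mul]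
  rw [← integral_const_mul, ← integral_const_mul,
    ← integral_add (hint.const_mul s) (hint'.const_mul t)]
  refine setIntegral_mono_on (integrableOn_tailEnergy_integrand hab hGc hhc hw hσ
    ((hmeas.const_smul s).add (hmeas'.const_smul t)) hcomb)
    ((hint.const_mul s).add (hint'.const_mul t)) measurableSet_Ioc fun r hr => ?_
  rw [tailIntegral_mul_add_mul (Integrable.of_bound hmeas σ hv)
    (Integrable.of_bound hmeas' σ hv') hr.1.le]
  refine (mul_le_mul_of_nonneg_left (add_le_add (hG.2 trivial trivial hs ht hst)
    (hh.2 trivial trivial hs ht hst)) (hw₀ r hr)).trans_eq ?_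
  simp only [smul_eq_mul]
  ring

variable {Φ : ℝ → Set ℝ}

theorem convexOn_tailEnergy (hab : a ≤ b) (hG : ConvexOn ℝ univ G) (hh : ConvexOn ℝ univ h)
    (hw : IntegrableOn w (Ioc a b)) (hw₀ : ∀ r ∈ Ioc a b, 0 ≤ w r) (hσ : 0 ≤ σ)
    (hΦconv : ∀ r, Convex ℝ (Φ r)) (hΦσ : ∀ r, ∀ x ∈ Φ r, |x| ≤ σ) :
    ConvexOn ℝ (LpSelections Φ 2 (volume.restrict (Ioc a b))) fun v => tailEnergy a b w G h v := by
  refine ⟨convex_lpSelections hΦconv, fun v hv v' hv' s t hs ht hst => ?_⟩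
  refine (tailEnergy_congr_ae (coeFn_smul_add_smul s t v v')).trans_le ?_
  exact tailEnergy_smul_add_smul_le hab hG hh hw hw₀ hσ
    (Lp.aestronglyMeasurable v) ((ae_mem_of_mem_lpSelections hv).mono fun r => hΦσ r _)
    (Lp.aestronglyMeasurable v') ((ae_mem_of_mem_lpSelections hv').mono fun r => hΦσ r _)
    hs ht hst

theorem continuousOn_tailEnergy (hab : a ≤ b) (hG : Continuous G) (hh : Continuous h)
    (hw : IntegrableOn w (Ioc a b)) (hσ : 0 ≤ σ) (hΦσ : ∀ r, ∀ x ∈ Φ r, |x| ≤ σ) :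
    ContinuousOn (fun v : Lp ℝ 2 (volume.restrict (Ioc a b)) => tailEnergy a b w G h v)
      (LpSelections Φ 2 (volume.restrict (Ioc a b))) := by
  refine fun v _ => tendsto_of_subseq_tendsto fun f hf => ?_
  obtain ⟨hlim, hmem⟩ := tendsto_nhdsWithin_iff.1 hf
  obtain ⟨ns, hns, hae⟩ := (tendstoInMeasure_of_tendsto_Lp hlim).exists_seq_tendsto_ae
  refine ⟨ns, tendsto_tailEnergy hab hG hh hw hσ (fun k => Lp.aestronglyMeasurable _) ?_ hae⟩
  filter_upwards [hns.tendsto_atTop.eventually hmem] with k hk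
  filter_upwards [hk] with r hr using hΦσ r _ hr

/-- A measurable function on `(a, b]` with values almost everywhere in the sets `Φ r`. -/
structure IsSelectionOn (Φ : ℝ → Set ℝ) (a b : ℝ) (v : ℝ → ℝ) : Prop where
  aestronglyMeasurable : AEStronglyMeasurable v (volume.restrict (Ioc a b))
  ae_mem : ∀ᵐ r ∂volume.restrict (Ioc a b), v r ∈ Φ r

theorem IsSelectionOn.exists_lp (hv : IsSelectionOn Φ a b v) (hΦσ : ∀ r, ∀ x ∈ Φ r, |x| ≤ σ) :
    ∃ V ∈ LpSelections Φ 2 (volume.restrict (Ioc a b)), V =ᵐ[volume.restrict (Ioc a b)] v := by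
  have hLp : MemLp v 2 (volume.restrict (Ioc a b)) :=
    MemLp.of_bound hv.aestronglyMeasurable σ (hv.ae_mem.mono fun r => hΦσ r _)
  refine ⟨hLp.toLp, ?_, hLp.coeFn_toLp⟩
  filter_upwards [hLp.coeFn_toLp, hv.ae_mem] with r hr hmem
  rwa [hr]

theorem exists_selection_tailEnergy_le (hab : a ≤ b) (hG : ConvexOn ℝ univ G)
    (hh : ConvexOn ℝ univ h) (hw : IntegrableOn w (Ioc a b)) (hw₀ : ∀ r ∈ Ioc a b, 0 ≤ w r)
    (hσ : 0 ≤ σ) (hΦclosed : ∀ r, IsClosed (Φ r)) (hΦconv : ∀ r, Convex ℝ (Φ r))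
    (hΦσ : ∀ r, ∀ x ∈ Φ r, |x| ≤ σ) (hne : ∃ v, IsSelectionOn Φ a b v) :
    ∃ v, IsSelectionOn Φ a b v ∧
      ∀ v', IsSelectionOn Φ a b v' → tailEnergy a b w G h v ≤ tailEnergy a b w G h v' := by
  have hGc : Continuous G := continuousOn_univ.1 (hG.continuousOn isOpen_univ)
  have hhc : Continuous h := continuousOn_univ.1 (hh.continuousOn isOpen_univ)
  obtain ⟨v₀, hv₀⟩ := hne
  obtain ⟨V₀, hV₀, -⟩ := hv₀.exists_lp hΦσ
  obtain ⟨V, hV, hmin⟩ := exists_isMinOn_of_convexOn_of_lowerSemicontinuousOn ⟨V₀, hV₀⟩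
    (isClosed_lpSelections hΦclosed) (isBounded_lpSelections hσ hΦσ)
    (convexOn_tailEnergy hab hG hh hw hw₀ hσ hΦconv hΦσ)
    (continuousOn_tailEnergy hab hGc hhc hw hσ hΦσ).lowerSemicontinuousOn
  refine ⟨V, ⟨Lp.aestronglyMeasurable V, hV⟩, fun v' hv' => ?_⟩
  obtain ⟨V', hV', hae⟩ := hv'.exists_lp hΦσ
  exact (hmin hV').trans_eq (tailEnergy_congr_ae hae)

end TailEnergy

section Fubini

variable {a b : ℝ} {w d : ℝ → ℝ}

/-- The integrand of `∫ₐᵇ ∫ᵣᵇ w(r) d(s) ds dr`, extended by zero to the square. -/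
def triangleKernel (w d : ℝ → ℝ) (p : ℝ × ℝ) : ℝ :=
  {p : ℝ × ℝ | p.1 < p.2}.indicator (fun p => w p.1 * d p.2) p

theorem triangleKernel_eq_indicator_Iio (w d : ℝ → ℝ) (r s : ℝ) :
    triangleKernel w d (r, s) = (Iio s).indicator (fun r => w r * d s) r :=
  rfl

theorem triangleKernel_eq_indicator_Ioi (w d : ℝ → ℝ) (r s : ℝ) :
    triangleKernel w d (r, s) = (Ioi r).indicator (fun s => w r * d s) s :=
  rfl

theorem norm_triangleKernel (w d : ℝ → ℝ) (p : ℝ × ℝ) :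
    ‖triangleKernel w d p‖ = triangleKernel (fun r => |w r|) (fun s => |d s|) p := by
  simp only [triangleKernel, norm_indicator_eq_indicator_norm, norm_mul, Real.norm_eq_abs]

theorem setIntegral_triangleKernel_left {s : ℝ} (hs : s ≤ b) :
    ∫ r in Ioc a b, triangleKernel w d (r, s) = (∫ r in Ioo a s, w r) * d s := by
  have hset : Ioc a b ∩ Iio s = Ioo a s := by
    rw [← Ioi_inter_Iic, inter_assoc, inter_eq_right.2 (Iio_subset_Iic hs), Ioi_inter_Iio]
  simp only [triangleKernel_eq_indicator_Iio]
  rw [setIntegral_indicator measurableSet_Iio, hset, integral_mul_const]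

theorem setIntegral_triangleKernel_right {r : ℝ} (hr : a ≤ r) :
    ∫ s in Ioc a b, triangleKernel w d (r, s) = w r * tailIntegral b d r := by
  simp only [triangleKernel_eq_indicator_Ioi]
  rw [setIntegral_indicator measurableSet_Ioi, Ioc_inter_Ioi, max_eq_right hr, integral_const_mul,
    tailIntegral]

theorem integrable_triangleKernel (hw : IntegrableOn w (Ioc a b))
    (hd : AEStronglyMeasurable d (volume.restrict (Ioc a b)))
    (hwd : IntegrableOn (fun s => (∫ r in Ioo a s, |w r|) * |d s|) (Ioc a b)) :
    Integrable (triangleKernel w d)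
      ((volume.restrict (Ioc a b)).prod (volume.restrict (Ioc a b))) := by
  have hmeas : AEStronglyMeasurable (triangleKernel w d)
      ((volume.restrict (Ioc a b)).prod (volume.restrict (Ioc a b))) :=
    (hw.1.comp_fst.mul hd.comp_snd).indicator (measurableSet_lt measurable_fst measurable_snd)
  refine (integrable_prod_iff' hmeas).2 ⟨ae_of_all _ fun s => ?_, hwd.congr ?_⟩
  · simp only [triangleKernel_eq_indicator_Iio]
    exact (hw.mul_const (d s)).indicator measurableSet_Iio
  · filter_upwards [ae_restrict_mem measurableSet_Ioc] with s hs
    simp only [norm_triangleKernel]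
    exact (setIntegral_triangleKernel_left (d := fun s => |d s|) hs.2).symm

theorem integrableOn_mul_tailIntegral (hw : IntegrableOn w (Ioc a b))
    (hd : AEStronglyMeasurable d (volume.restrict (Ioc a b)))
    (hwd : IntegrableOn (fun s => (∫ r in Ioo a s, |w r|) * |d s|) (Ioc a b)) :
    IntegrableOn (fun r => w r * tailIntegral b d r) (Ioc a b) := by
  refine (integrable_triangleKernel hw hd hwd).integral_prod_left.congr ?_
  filter_upwards [ae_restrict_mem measurableSet_Ioc] with r hr
    using setIntegral_triangleKernel_right hr.1.le

theorem integral_mul_tailIntegral (hw : IntegrableOn w (Ioc a b))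
    (hd : AEStronglyMeasurable d (volume.restrict (Ioc a b)))
    (hwd : IntegrableOn (fun s => (∫ r in Ioo a s, |w r|) * |d s|) (Ioc a b)) :
    ∫ r in Ioc a b, w r * tailIntegral b d r = ∫ s in Ioc a b, (∫ r in Ioo a s, w r) * d s :=
  calc ∫ r in Ioc a b, w r * tailIntegral b d r
      = ∫ r in Ioc a b, ∫ s in Ioc a b, triangleKernel w d (r, s) :=
        setIntegral_congr_fun measurableSet_Ioc fun _ hr =>
          (setIntegral_triangleKernel_right hr.1.le).symm
    _ = ∫ s in Ioc a b, ∫ r in Ioc a b, triangleKernel w d (r, s) :=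
        integral_integral_swap (integrable_triangleKernel hw hd hwd)
    _ = ∫ s in Ioc a b, (∫ r in Ioo a s, w r) * d s :=
        setIntegral_congr_fun measurableSet_Ioc fun _ hs => setIntegral_triangleKernel_left hs.2

end Fubini

section PowerWeight

variable {n : ℕ} {R : ℝ} {f : ℝ → ℝ}

theorem integrableOn_pow_Ioc (n : ℕ) (a b : ℝ) : IntegrableOn (fun r : ℝ => r ^ n) (Ioc a b) :=
  (continuous_pow n).integrableOn_Ioc

theorem aestronglyMeasurable_of_pow_mul (hf : IntegrableOn (fun r => r ^ n * f r) (Ioc 0 R)) :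
    AEStronglyMeasurable f (volume.restrict (Ioc 0 R)) := by
  have hinv : AEStronglyMeasurable (fun r : ℝ => (r ^ n)⁻¹) (volume.restrict (Ioc 0 R)) :=
    (measurable_id.pow_const n).inv.aestronglyMeasurable
  refine (hinv.mul hf.1).congr ?_
  filter_upwards [ae_restrict_mem measurableSet_Ioc] with r hr
  exact inv_mul_cancel_left₀ (pow_ne_zero n hr.1.ne') _

theorem integrableOn_Ioc_of_pow_mul {r : ℝ} (hr : 0 < r)
    (hf : IntegrableOn (fun r => r ^ n * f r) (Ioc 0 R)) : IntegrableOn f (Ioc r R) := by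
  have hpos {x : ℝ} (hx : x ∈ Icc r R) : x ^ n ≠ 0 := pow_ne_zero n (hr.trans_le hx.1).ne'
  have hinv : ContinuousOn (fun x : ℝ => (x ^ n)⁻¹) (Icc r R) :=
    (continuous_pow n).continuousOn.inv₀ fun x hx => hpos hx
  refine ((hf.mono_set (Ioc_subset_Ioc_left hr.le)).continuousOn_mul_of_subset hinv
    isCompact_Icc measurableSet_Ioc Ioc_subset_Icc_self).congr_fun (fun x hx => ?_)
    measurableSet_Ioc
  exact inv_mul_cancel_left₀ (hpos (Ioc_subset_Icc_self hx)) _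

theorem setIntegral_Ioo_pow {s : ℝ} (hs : 0 ≤ s) (n : ℕ) :
    ∫ r in Ioo 0 s, r ^ n = s / (n + 1) * s ^ n := by
  rw [← integral_Ioc_eq_integral_Ioo, ← intervalIntegral.integral_of_le hs, integral_pow,
    zero_pow n.succ_ne_zero, sub_zero, pow_succ]
  ring

theorem setIntegral_Ioo_abs_pow {s : ℝ} (hs : 0 ≤ s) (n : ℕ) :
    ∫ r in Ioo 0 s, |r ^ n| = s / (n + 1) * s ^ n := by
  rw [← setIntegral_Ioo_pow hs]
  exact setIntegral_congr_fun measurableSet_Ioo fun r hr => abs_of_nonneg (pow_nonneg hr.1.le n)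

theorem integrableOn_div_mul_pow_mul (hf : IntegrableOn (fun r => r ^ n * f r) (Ioc 0 R)) :
    IntegrableOn (fun s => s / (n + 1) * s ^ n * f s) (Ioc 0 R) := by
  simp only [mul_assoc]
  exact hf.continuousOn_mul_of_subset (continuous_id.div_const _).continuousOn
    isCompact_Icc measurableSet_Ioc Ioc_subset_Icc_self

theorem integrableOn_pow_primitive_mul_abs
    (hf : IntegrableOn (fun r => r ^ n * f r) (Ioc 0 R)) :
    IntegrableOn (fun s => (∫ r in Ioo 0 s, |r ^ n|) * |f s|) (Ioc 0 R) := by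
  refine (integrableOn_div_mul_pow_mul hf).abs.congr ?_
  filter_upwards [ae_restrict_mem measurableSet_Ioc] with s hs
  have hs₀ : 0 ≤ s / (n + 1) * s ^ n := by have := hs.1; positivity
  rw [abs_mul, abs_of_nonneg hs₀, setIntegral_Ioo_abs_pow hs.1.le]

theorem integrableOn_pow_mul_tailIntegral
    (hf : IntegrableOn (fun r => r ^ n * f r) (Ioc 0 R)) :
    IntegrableOn (fun r => r ^ n * tailIntegral R f r) (Ioc 0 R) :=
  integrableOn_mul_tailIntegral (integrableOn_pow_Ioc n 0 R) (aestronglyMeasurable_of_pow_mul hf)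
    (integrableOn_pow_primitive_mul_abs hf)

theorem integral_pow_mul_tailIntegral_le (hf₀ : ∀ r, 0 ≤ f r)
    (hf : IntegrableOn (fun r => r ^ n * f r) (Ioc 0 R)) :
    ∫ r in Ioc 0 R, r ^ n * tailIntegral R f r
      ≤ R / (n + 1) * ∫ r in Ioc 0 R, r ^ n * f r :=
  calc ∫ r in Ioc 0 R, r ^ n * tailIntegral R f r
      = ∫ s in Ioc 0 R, (∫ r in Ioo 0 s, r ^ n) * f s :=
        integral_mul_tailIntegral (integrableOn_pow_Ioc n 0 R) (aestronglyMeasurable_of_pow_mul hf)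
          (integrableOn_pow_primitive_mul_abs hf)
    _ = ∫ s in Ioc 0 R, s / (n + 1) * s ^ n * f s :=
        setIntegral_congr_fun measurableSet_Ioc fun s hs => by
          simp only [setIntegral_Ioo_pow hs.1.le]
    _ ≤ ∫ s in Ioc 0 R, R / (n + 1) * (s ^ n * f s) := by
        refine setIntegral_mono_on (integrableOn_div_mul_pow_mul hf) (hf.const_mul _)
          measurableSet_Ioc fun s hs => ?_
        have hs₀ := hs.1.le
        rw [mul_assoc]
        exact mul_le_mul_of_nonneg_right (by gcongr; exact hs.2)
          (mul_nonneg (pow_nonneg hs₀ n) (hf₀ s))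
    _ = R / (n + 1) * ∫ r in Ioc 0 R, r ^ n * f r := integral_const_mul _ _

end PowerWeight

section ConvexFunctions

variable {f : ℝ → ℝ}

theorem add_mul_sub_le_of_convexOn (hf : ConvexOn ℝ univ f) {x y z q : ℝ} (hxy : x < y)
    (hyz : y ≤ z) (hq : f x + q * (y - x) ≤ f y) : f y + q * (z - y) ≤ f z := by
  obtain rfl | hyz := hyz.eq_or_lt
  · simp
  have hslope : q ≤ (f z - f y) / (z - y) :=
    ((le_div_iff₀ (sub_pos.2 hxy)).2 (le_sub_iff_add_le'.2 hq)).trans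
      (hf.slope_mono_adjacent (mem_univ x) (mem_univ z) hxy hyz)
  exact le_sub_iff_add_le'.1 ((le_div_iff₀ (sub_pos.2 hyz)).1 hslope)

theorem add_mul_sub_le_of_convexOn_of_forall (hf : ConvexOn ℝ univ f) {q : ℝ}
    (hq : ∀ x, 0 ≤ x → f 0 + q * x ≤ f x) {x y : ℝ} (hx : 0 ≤ x) (hxy : x ≤ y) :
    f x + q * (y - x) ≤ f y := by
  obtain rfl | hx := hx.eq_or_lt
  · simpa using hq y hxy
  · exact add_mul_sub_le_of_convexOn hf hx hxy (by simpa using hq x hx.le)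

theorem apply_zero_le_of_convexOn_of_even (hf : ConvexOn ℝ univ f) (heven : f.Even) (x : ℝ) :
    f 0 ≤ f x := by
  have hzero : (0 : ℝ) ∈ segment ℝ x (-x) :=
    midpoint_self_neg ℝ x ▸ midpoint_mem_segment x (-x)
  simpa [heven x] using hf.le_max_of_mem_segment (mem_univ x) (mem_univ (-x)) hzero

theorem antitoneOn_Iic_of_convexOn_of_forall_le (hf : ConvexOn ℝ univ f) {c : ℝ}
    (hc : ∀ x, f c ≤ f x) : AntitoneOn f (Iic c) := by
  intro x _ y hy hxy
  obtain rfl | hyc := (mem_Iic.1 hy).eq_or_lt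
  · exact hc x
  · exact hf.le_left_of_right_le'' (mem_univ x) (mem_univ c) hxy hyc (hc y)

theorem antitone_comp_min {c : ℝ} (hf : AntitoneOn f (Iic c)) : Antitone fun x => f (min x c) :=
  fun _ _ hxy => hf (min_le_right _ c) (min_le_right _ c) (min_le_min_right c hxy)

theorem convexOn_comp_min (hf : ConvexOn ℝ univ f) {c : ℝ} (hanti : AntitoneOn f (Iic c)) :
    ConvexOn ℝ univ fun x => f (min x c) := by
  refine ⟨convex_univ, fun x _ y _ s t hs ht hst => ?_⟩
  have hmin : s • min x c + t • min y c ≤ min (s • x + t • y) c :=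
    ((concaveOn_id convex_univ).inf (concaveOn_const c convex_univ)).2
      (mem_univ x) (mem_univ y) hs ht hst
  calc f (min (s • x + t • y) c)
      ≤ f (s • min x c + t • min y c) :=
        hanti (hmin.trans (min_le_right _ c)) (min_le_right _ c) hmin
    _ ≤ s • f (min x c) + t • f (min y c) := hf.2 (mem_univ _) (mem_univ _) hs ht hst

theorem antitone_or_exists_forall_le_of_convexOn (hf : ConvexOn ℝ univ f)
    (hneg : ∀ x ≤ 0, f 0 ≤ f x) : Antitone f ∨ ∃ c, 0 ≤ c ∧ ∀ x, f c ≤ f x := by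
  refine or_iff_not_imp_left.2 fun hnot => ?_
  obtain ⟨x₀, y₀, hxy, hlt⟩ : ∃ x₀ y₀, x₀ < y₀ ∧ f x₀ < f y₀ := by
    simp only [Antitone, not_forall, not_le] at hnot
    obtain ⟨x₀, y₀, hxy, hlt⟩ := hnot
    exact ⟨x₀, y₀, hxy.lt_of_ne fun heq => hlt.ne (congrArg f heq), hlt⟩
  set b := max y₀ 0
  have hincreasing (x : ℝ) (hx : b ≤ x) : f b ≤ f x := by
    have hb : f y₀ ≤ f b := hf.le_right_of_left_le'' (mem_univ x₀) (mem_univ b) hxy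
      (le_max_left y₀ 0) hlt.le
    exact hf.le_right_of_left_le'' (mem_univ x₀) (mem_univ x) (hxy.trans_le (le_max_left y₀ 0)) hx
      (hlt.le.trans hb)
  obtain ⟨c, hc, hmin⟩ := (isCompact_Icc (a := 0) (b := b)).exists_isMinOn
    (nonempty_Icc.2 (le_max_right y₀ 0)) ((hf.continuousOn isOpen_univ).mono (subset_univ _))
  refine ⟨c, hc.1, fun x => ?_⟩
  obtain hx | hx := le_total x 0
  · exact (hmin (left_mem_Icc.2 (le_max_right y₀ 0))).trans (hneg x hx)
  obtain hxb | hxb := le_total x b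
  · exact hmin ⟨hx, hxb⟩
  · exact (hmin (right_mem_Icc.2 (le_max_right y₀ 0))).trans (hincreasing x hxb)

end ConvexFunctions

section OneSidedDerivatives

variable {h : ℝ → ℝ}

theorem secant_le_secant_of_convexOn (hh : ConvexOn ℝ univ h) {s t : ℝ} (hs : s < 0)
    (ht : 0 < t) : (h s - h 0) / s ≤ (h t - h 0) / t := by
  have hslope := hh.slope_mono_adjacent (mem_univ s) (mem_univ t) hs ht
  rwa [zero_sub, sub_zero, ← neg_sub, neg_div_neg_eq] at hslope

theorem rightD_le_secant (hh : ConvexOn ℝ univ h) {t : ℝ} (ht : 0 < t) :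
    rightD h ≤ (h t - h 0) / t := by
  refine csInf_le ⟨(h (-1) - h 0) / (-1), ?_⟩ (mem_image_of_mem _ ht)
  rintro _ ⟨x, hx, rfl⟩
  exact secant_le_secant_of_convexOn hh neg_one_lt_zero hx

theorem secant_le_leftD (hh : ConvexOn ℝ univ h) {t : ℝ} (ht : t < 0) :
    (h t - h 0) / t ≤ leftD h := by
  refine le_csSup ⟨(h 1 - h 0) / 1, ?_⟩ (mem_image_of_mem _ ht)
  rintro _ ⟨x, hx, rfl⟩
  exact secant_le_secant_of_convexOn hh hx one_pos

theorem leftD_le_rightD (hh : ConvexOn ℝ univ h) : leftD h ≤ rightD h := by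
  refine csSup_le (nonempty_Iio.image _) ?_
  rintro _ ⟨s, hs, rfl⟩
  refine le_csInf (nonempty_Ioi.image _) ?_
  rintro _ ⟨t, ht, rfl⟩
  exact secant_le_secant_of_convexOn hh hs ht

theorem apply_zero_le_of_leftD_nonpos (hh : ConvexOn ℝ univ h) (hleft : leftD h ≤ 0) {x : ℝ}
    (hx : x ≤ 0) : h 0 ≤ h x := by
  obtain rfl | hx := hx.eq_or_lt
  · exact le_rfl
  have hsecant := (secant_le_leftD hh hx).trans hleft
  rw [div_le_iff_of_neg hx, zero_mul] at hsecant
  exact sub_nonneg.1 hsecant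

theorem apply_zero_add_rightD_mul_le (hh : ConvexOn ℝ univ h) {x : ℝ} (hx : 0 ≤ x) :
    h 0 + rightD h * x ≤ h x := by
  obtain rfl | hx := hx.eq_or_lt
  · simp
  exact le_sub_iff_add_le'.1 ((le_div_iff₀ hx).1 (rightD_le_secant hh hx))

theorem image_secant_comp_neg (h : ℝ → ℝ) (s : Set ℝ) :
    (fun t => (h (-t) - h (-0)) / t) '' s = -((fun t => (h t - h 0) / t) '' (-s)) := by
  rw [← image_neg_eq_neg, ← image_neg_eq_neg, image_image, image_image]
  exact image_congr fun t _ => by rw [neg_zero, div_neg, neg_neg]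

theorem leftD_comp_neg (h : ℝ → ℝ) : leftD (fun x => h (-x)) = -rightD h := by
  rw [leftD, image_secant_comp_neg, neg_Iio, neg_zero, Real.sSup_neg, rightD]

theorem rightD_comp_neg (h : ℝ → ℝ) : rightD (fun x => h (-x)) = -leftD h := by
  rw [rightD, image_secant_comp_neg, neg_Ioi, neg_zero, Real.sInf_neg, leftD]

theorem convexOn_comp_neg (hh : ConvexOn ℝ univ h) : ConvexOn ℝ univ fun x => h (-x) :=
  hh.comp_linearMap (-LinearMap.id)

end OneSidedDerivatives

theorem exists_pos_add_mul_sub_le_of_lt_mconstE {g : ℝ → ℝ}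
    (hg : ConvexOn ℝ univ fun z => g |z|) {q : ℝ} (hq : (q : EReal) < MconstE g) :
    ∃ σ, 0 < σ ∧ ∀ s, σ ≤ s → g σ + q * (s - σ) ≤ g s := by
  obtain ⟨q', hqq', hq'⟩ := EReal.lt_iff_exists_real_btwn.1 hq
  have hgap : 0 < q' - q := sub_pos.2 (EReal.coe_lt_coe_iff.1 hqq')
  obtain ⟨σ, hslope, hlarge⟩ := ((eventually_lt_of_lt_liminf hq').and
    (eventually_gt_atTop (max 0 (g 0 / (q' - q))))).exists
  have hσ : 0 < σ := (le_max_left _ _).trans_lt hlarge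
  have hsecant : g 0 + q * σ ≤ g σ := by
    have h₁ := (lt_div_iff₀ hσ).1 (EReal.coe_lt_coe_iff.1 hslope)
    have h₂ := (div_lt_iff₀ hgap).1 ((le_max_right _ _).trans_lt hlarge)
    linarith
  refine ⟨σ, hσ, fun s hs => ?_⟩
  have hconv := add_mul_sub_le_of_convexOn hg (q := q) hσ hs
    (by simpa [abs_of_pos hσ] using hsecant)
  simpa only [abs_of_pos hσ, abs_of_pos (hσ.trans_le hs)] using hconv

theorem exists_min_eq_comp_max {Y : ℝ → ℝ} {a b c : ℝ} (hab : a ≤ b)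
    (hcont : ContinuousOn Y (Icc a b)) (hanti : AntitoneOn Y (Icc a b)) (hc : Y b ≤ c) :
    ∃ ρ, ∀ r ∈ Icc a b, min (Y r) c = Y (max r ρ) := by
  obtain ha | ha := le_total (Y a) c
  · refine ⟨a, fun r hr => ?_⟩
    rw [max_eq_left hr.1, min_eq_left ((hanti (left_mem_Icc.2 hab) hr hr.1).trans ha)]
  · obtain ⟨ρ, hρ, rfl⟩ := intermediate_value_Icc' hab hcont ⟨hc, ha⟩
    refine ⟨ρ, fun r hr => ?_⟩
    obtain hrρ | hρr := le_total r ρ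
    · rw [max_eq_right hrρ, min_eq_right (hanti hr hρ hrρ)]
    · rw [max_eq_left hρr, min_eq_left (hanti hρ hr hρr)]

section SlopeBounds

variable {σ : ℝ} {μ : ℝ → ℝ≥0∞} {r x : ℝ}

/-- The slopes admitted at radius `r`: nonnegative numbers below both `μ r` and the level `σ`. -/
def slopeBounds (σ : ℝ) (μ : ℝ → ℝ≥0∞) (r : ℝ) : Set ℝ := Icc 0 σ ∩ ENNReal.ofReal ⁻¹' Iic (μ r)

theorem isClosed_slopeBounds (σ : ℝ) (μ : ℝ → ℝ≥0∞) (r : ℝ) : IsClosed (slopeBounds σ μ r) :=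
  isClosed_Icc.inter (isClosed_Iic.preimage ENNReal.continuous_ofReal)

theorem convex_slopeBounds (σ : ℝ) (μ : ℝ → ℝ≥0∞) (r : ℝ) : Convex ℝ (slopeBounds σ μ r) :=
  (convex_Icc 0 σ).inter (ordConnected_Iic.preimage_mono ENNReal.ofReal_mono).convex

theorem zero_mem_slopeBounds (hσ : 0 ≤ σ) (μ : ℝ → ℝ≥0∞) (r : ℝ) : 0 ∈ slopeBounds σ μ r :=
  ⟨left_mem_Icc.2 hσ, by simp⟩

theorem abs_le_of_mem_slopeBounds (hx : x ∈ slopeBounds σ μ r) : |x| ≤ σ :=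
  (abs_of_nonneg hx.1.1).trans_le hx.1.2

theorem isSelectionOn_zero (hσ : 0 ≤ σ) (μ : ℝ → ℝ≥0∞) (a b : ℝ) :
    IsSelectionOn (slopeBounds σ μ) a b 0 :=
  ⟨aestronglyMeasurable_zero, ae_of_all _ fun r => zero_mem_slopeBounds hσ μ r⟩

end SlopeBounds

section ERInt

variable {f f' : ℝ → ℝ} {s : Set ℝ}

theorem ERInt_eq_coe_integral (hf : IntegrableOn f s) :
    ERInt f s = ((∫ x in s, f x : ℝ) : EReal) := by
  have hpos : ∫⁻ x in s, ENNReal.ofReal (f x) ≠ ⊤ :=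
    ne_top_of_le_ne_top hf.2.ne (lintegral_mono fun _ => Real.ofReal_le_enorm _)
  have hneg : ∫⁻ x in s, ENNReal.ofReal (-f x) ≠ ⊤ :=
    ne_top_of_le_ne_top hf.neg.2.ne (lintegral_mono fun _ => Real.ofReal_le_enorm _)
  rw [ERInt, integral_eq_lintegral_pos_part_sub_lintegral_neg_part hf, EReal.coe_sub,
    EReal.coe_ennreal_toReal hpos, EReal.coe_ennreal_toReal hneg]

theorem ERInt_mono_ae (hle : ∀ᵐ x ∂volume.restrict s, f x ≤ f' x) : ERInt f s ≤ ERInt f' s := by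
  refine EReal.sub_le_sub (EReal.coe_ennreal_le_coe_ennreal_iff.2 (lintegral_mono_ae ?_))
    (EReal.coe_ennreal_le_coe_ennreal_iff.2 (lintegral_mono_ae ?_))
  · filter_upwards [hle] with x hx using ENNReal.ofReal_le_ofReal hx
  · filter_upwards [hle] with x hx using ENNReal.ofReal_le_ofReal (neg_le_neg hx)

theorem coe_integral_le_ERInt {d : ℝ → ℝ} (hf : IntegrableOn f s) (hd : IntegrableOn d s)
    (hd₀ : 0 ≤ ∫ x in s, d x) (hle : ∀ᵐ x ∂volume.restrict s, f x + d x ≤ f' x) :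
    ((∫ x in s, f x : ℝ) : EReal) ≤ ERInt f' s :=
  calc ((∫ x in s, f x : ℝ) : EReal)
      ≤ ((∫ x in s, (f x + d x) : ℝ) : EReal) := by
        rw [integral_add hf hd]
        exact EReal.coe_le_coe_iff.2 (le_add_of_nonneg_right hd₀)
    _ = ERInt (fun x => f x + d x) s := (ERInt_eq_coe_integral (hf.add hd)).symm
    _ ≤ ERInt f' s := ERInt_mono_ae hle

end ERInt

namespace RadW

variable {N : ℕ} {R : ℝ} {μ : ℝ → ℝ≥0∞} {g h h' v : ℝ → ℝ}

/-- The element of `𝒲` with derivative `-v`. -/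
def ofSlope (v : ℝ → ℝ) (hv : IntegrableOn (fun r => r ^ (N - 1) * |v r|) (Ioc 0 R)) :
    RadW N R where
  u := tailIntegral R v
  u' r := -v r
  integ := by simpa only [abs_neg] using hv
  rep r _ := by rw [integral_neg, neg_neg, tailIntegral]

theorem memWmu_ofSlope (hv : IntegrableOn (fun r => r ^ (N - 1) * |v r|) (Ioc 0 R))
    (hμ : ∀ᵐ r ∂volume.restrict (Ioc 0 R), ENNReal.ofReal |v r| ≤ μ r) :
    memWmu N R μ (ofSlope v hv) := by
  simpa only [memWmu, ofSlope, abs_neg] using hμ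

theorem Fcon_ofSlope (hv : IntegrableOn (fun r => r ^ (N - 1) * |v r|) (Ioc 0 R))
    (hint : IntegrableOn (fun r => r ^ (N - 1) * (g |v r| + h (tailIntegral R v r))) (Ioc 0 R)) :
    Fcon N R g h (ofSlope v hv)
      = (tailEnergy 0 R (fun r => r ^ (N - 1)) (fun z => g |z|) h v : EReal) := by
  simp only [Fcon, ofSlope, abs_neg]
  exact ERInt_eq_coe_integral hint

theorem Fcon_mono (hle : ∀ x, h x ≤ h' x) (u : RadW N R) : Fcon N R g h u ≤ Fcon N R g h' u := by
  refine ERInt_mono_ae ?_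
  filter_upwards [ae_restrict_mem measurableSet_Ioc] with r hr
  exact mul_le_mul_of_nonneg_left (add_le_add_right (hle _) _) (pow_nonneg hr.1.le _)

/-- The function `-u`, as an element of `𝒲`. -/
def neg (u : RadW N R) : RadW N R where
  u r := -u.u r
  u' r := -u.u' r
  integ := by simpa only [abs_neg] using u.integ
  rep r hr := by rw [integral_neg, u.rep r hr]

theorem memWmu_neg {u : RadW N R} (hu : memWmu N R μ u) : memWmu N R μ u.neg := by
  simpa only [memWmu, neg, abs_neg] using hu

theorem Fcon_neg (g h : ℝ → ℝ) (u : RadW N R) :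
    Fcon N R g h u.neg = Fcon N R g (fun x => h (-x)) u := by
  simp only [Fcon, neg, abs_neg]

end RadW

section Truncation

variable {n : ℕ} {R l σ : ℝ} {g h : ℝ → ℝ} {μ : ℝ → ℝ≥0∞}

namespace RadW

variable {N : ℕ} (u : RadW N R)

/-- The slope `|u'|` truncated at the level `σ`. -/
def truncSlope (σ : ℝ) (r : ℝ) : ℝ := min |u.u' r| σ

theorem truncSlope_nonneg (hσ : 0 ≤ σ) (r : ℝ) : 0 ≤ u.truncSlope σ r :=
  le_min (abs_nonneg _) hσ

theorem abs_truncSlope_le (hσ : 0 ≤ σ) (r : ℝ) : |u.truncSlope σ r| ≤ σ :=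
  (abs_of_nonneg (u.truncSlope_nonneg hσ r)).trans_le (min_le_right _ _)

/-- The part of the slope `|u'|` above the level `σ`. -/
def excessSlope (σ : ℝ) (r : ℝ) : ℝ := |u.u' r| - u.truncSlope σ r

theorem excessSlope_nonneg (r : ℝ) : 0 ≤ u.excessSlope σ r :=
  sub_nonneg.2 (min_le_left _ _)

theorem aestronglyMeasurable_truncSlope (σ : ℝ) :
    AEStronglyMeasurable (u.truncSlope σ) (volume.restrict (Ioc 0 R)) :=
  (continuous_id.min continuous_const).comp_aestronglyMeasurable
    (aestronglyMeasurable_of_pow_mul u.integ)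

theorem integrableOn_truncSlope (hσ : 0 ≤ σ) : IntegrableOn (u.truncSlope σ) (Ioc 0 R) :=
  Integrable.of_bound (u.aestronglyMeasurable_truncSlope σ) σ
    (ae_of_all _ (u.abs_truncSlope_le hσ))

theorem integrableOn_pow_mul_excessSlope (hσ : 0 ≤ σ) :
    IntegrableOn (fun r => r ^ (N - 1) * u.excessSlope σ r) (Ioc 0 R) := by
  simp only [excessSlope, mul_sub]
  exact u.integ.sub ((u.integrableOn_truncSlope hσ).continuousOn_mul_of_subset
    (continuous_pow _).continuousOn isCompact_Icc measurableSet_Ioc Ioc_subset_Icc_self)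

theorem u_le_tailIntegral_add_tailIntegral (hσ : 0 ≤ σ) {r : ℝ} (hr : r ∈ Ioc 0 R) :
    u.u r ≤ tailIntegral R (u.truncSlope σ) r + tailIntegral R (u.excessSlope σ) r := by
  have htrunc := (u.integrableOn_truncSlope hσ).mono_set (Ioc_subset_Ioc_left hr.1.le)
  have habs := integrableOn_Ioc_of_pow_mul hr.1 u.integ
  calc u.u r = -∫ ρ in Ioc r R, u.u' ρ := u.rep r hr
    _ ≤ ∫ ρ in Ioc r R, |u.u' ρ| := (neg_le_abs _).trans (norm_integral_le_integral_norm u.u')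
    _ = ∫ ρ in Ioc r R, (u.truncSlope σ ρ + u.excessSlope σ ρ) := by
        simp only [excessSlope, add_sub_cancel]
    _ = tailIntegral R (u.truncSlope σ) r + tailIntegral R (u.excessSlope σ) r :=
        integral_add htrunc (habs.sub htrunc)

theorem isSelectionOn_truncSlope {u : RadW N R} (hu : memWmu N R μ u) (hσ : 0 ≤ σ) :
    IsSelectionOn (slopeBounds σ μ) 0 R (u.truncSlope σ) := by
  refine ⟨u.aestronglyMeasurable_truncSlope σ, ?_⟩
  filter_upwards [hu] with r hr
  exact ⟨⟨u.truncSlope_nonneg hσ r, min_le_right _ _⟩,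
    (ENNReal.ofReal_le_ofReal (min_le_left _ _)).trans hr⟩

theorem apply_truncSlope_add_mul_excessSlope_le {q : ℝ}
    (hg : ∀ s, σ ≤ s → g σ + q * (s - σ) ≤ g s) (r : ℝ) :
    g (u.truncSlope σ r) + q * u.excessSlope σ r ≤ g |u.u' r| := by
  obtain hle | hle := le_total |u.u' r| σ
  · simp [excessSlope, truncSlope, min_eq_left hle]
  · simpa only [excessSlope, truncSlope, min_eq_right hle] using hg _ hle

theorem apply_tailIntegral_truncSlope_sub_le (hh : ConvexOn ℝ univ h) (hanti : Antitone h)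
    (hl : ∀ x, 0 ≤ x → h 0 + -l * x ≤ h x) (hσ : 0 ≤ σ) {r : ℝ} (hr : r ∈ Ioc 0 R) :
    h (tailIntegral R (u.truncSlope σ) r) - l * tailIntegral R (u.excessSlope σ) r
      ≤ h (u.u r) := by
  have htrunc : 0 ≤ tailIntegral R (u.truncSlope σ) r := integral_nonneg (u.truncSlope_nonneg hσ)
  have hexcess : 0 ≤ tailIntegral R (u.excessSlope σ) r := integral_nonneg u.excessSlope_nonneg
  have hconv := add_mul_sub_le_of_convexOn_of_forall hh hl htrunc (le_add_of_nonneg_right hexcess)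
  have hu := hanti (u.u_le_tailIntegral_add_tailIntegral hσ hr)
  rw [add_sub_cancel_left] at hconv
  linarith

end RadW

-- What truncation saves in `g` outweighs, by Fubini, what it costs in `h`.
theorem integral_saving_sub_cost_nonneg {d : ℝ → ℝ} (hl : 0 ≤ l) (hd₀ : ∀ r, 0 ≤ d r)
    (hd : IntegrableOn (fun r => r ^ n * d r) (Ioc 0 R)) :
    0 ≤ ∫ r in Ioc 0 R, (l * R / (n + 1) * (r ^ n * d r) - l * (r ^ n * tailIntegral R d r)) := by
  rw [integral_sub (hd.const_mul _) ((integrableOn_pow_mul_tailIntegral hd).const_mul _),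
    integral_const_mul, integral_const_mul, sub_nonneg, mul_div_assoc, mul_assoc]
  exact mul_le_mul_of_nonneg_left (integral_pow_mul_tailIntegral_le hd₀ hd) hl

theorem coe_tailEnergy_truncSlope_le_Fcon (hR : 0 ≤ R) (hg : ConvexOn ℝ univ fun z => g |z|)
    (hh : ConvexOn ℝ univ h) (hanti : Antitone h) (hl : ∀ x, 0 ≤ x → h 0 + -l * x ≤ h x)
    (hσ : 0 ≤ σ) (hgσ : ∀ s, σ ≤ s → g σ + l * R / (n + 1) * (s - σ) ≤ g s)
    (u : RadW (n + 1) R) :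
    (tailEnergy 0 R (fun r => r ^ n) (fun z => g |z|) h (u.truncSlope σ) : EReal)
      ≤ Fcon (n + 1) R g h u := by
  have hl₀ : 0 ≤ l := by linarith [hl 1 zero_le_one, hanti zero_le_one]
  have henergy := integrableOn_tailEnergy_integrand hR
    (continuousOn_univ.1 (hg.continuousOn isOpen_univ))
    (continuousOn_univ.1 (hh.continuousOn isOpen_univ)) (integrableOn_pow_Ioc n 0 R) hσ
    (u.aestronglyMeasurable_truncSlope σ) (ae_of_all _ (u.abs_truncSlope_le hσ))
  have hexcess := u.integrableOn_pow_mul_excessSlope hσ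
  refine coe_integral_le_ERInt henergy ((hexcess.const_mul (l * R / (n + 1))).sub
    ((integrableOn_pow_mul_tailIntegral hexcess).const_mul l))
    (integral_saving_sub_cost_nonneg hl₀ u.excessSlope_nonneg hexcess) ?_
  filter_upwards [ae_restrict_mem measurableSet_Ioc] with r hr
  refine le_trans (le_of_eq ?_) (mul_le_mul_of_nonneg_left
    (add_le_add (u.apply_truncSlope_add_mul_excessSlope_le hgσ r)
      (u.apply_tailIntegral_truncSlope_sub_le hh hanti hl hσ hr)) (pow_nonneg hr.1.le n))
  simp only [Pi.sub_apply, abs_of_nonneg (u.truncSlope_nonneg hσ r), Nat.add_sub_cancel]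
  ring

end Truncation

section Cutoff

variable {a b c σ : ℝ} {w G h v : ℝ → ℝ} {Φ : ℝ → Set ℝ}

theorem IsSelectionOn.indicator (hv : IsSelectionOn Φ a b v) (hΦ : ∀ r, 0 ∈ Φ r) {s : Set ℝ}
    (hs : MeasurableSet s) : IsSelectionOn Φ a b (s.indicator v) := by
  refine ⟨hv.aestronglyMeasurable.indicator hs, ?_⟩
  filter_upwards [hv.ae_mem] with r hr
  obtain hrs | hrs := em (r ∈ s)
  · rwa [indicator_of_mem hrs]
  · exact (indicator_of_notMem hrs v).symm ▸ hΦ r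

theorem exists_tailIntegral_indicator_eq_min (hab : a ≤ b) (hc : 0 ≤ c)
    (hv : IntegrableOn v (Ioc a b)) (hv₀ : ∀ᵐ r ∂volume.restrict (Ioc a b), 0 ≤ v r) :
    ∃ ρ, ∀ r ∈ Icc a b,
      tailIntegral b ((Ioi ρ).indicator v) r = min (tailIntegral b v r) c := by
  obtain ⟨ρ, hρ⟩ := exists_min_eq_comp_max hab (continuousOn_tailIntegral hab hv)
    ((antitoneOn_tailIntegral hv hv₀).mono Icc_subset_Ici_self)
    (show tailIntegral b v b ≤ c by simpa [tailIntegral] using hc)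
  exact ⟨ρ, fun r hr => (tailIntegral_indicator_Ioi ρ).trans (hρ r hr).symm⟩

theorem exists_tailEnergy_indicator_le (hab : a ≤ b) (hG : Continuous G) (hG₀ : ∀ x, G 0 ≤ G x)
    (hh : Continuous h) (hw : IntegrableOn w (Ioc a b)) (hw₀ : ∀ r ∈ Ioc a b, 0 ≤ w r)
    (hc : 0 ≤ c) (hmeas : AEStronglyMeasurable v (volume.restrict (Ioc a b)))
    (hv : ∀ᵐ r ∂volume.restrict (Ioc a b), v r ∈ Icc 0 σ) (hσ : 0 ≤ σ) :
    ∃ ρ, tailEnergy a b w G h ((Ioi ρ).indicator v)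
      ≤ tailEnergy a b w G (fun x => h (min x c)) v := by
  have hvσ : ∀ᵐ r ∂volume.restrict (Ioc a b), |v r| ≤ σ :=
    hv.mono fun r hr => (abs_of_nonneg hr.1).trans_le hr.2
  obtain ⟨ρ, hρ⟩ := exists_tailIntegral_indicator_eq_min hab hc (Integrable.of_bound hmeas σ hvσ)
    (hv.mono fun _ hr => hr.1)
  have hvσ' : ∀ᵐ r ∂volume.restrict (Ioc a b), |(Ioi ρ).indicator v r| ≤ σ :=
    hvσ.mono fun r hr => (norm_indicator_le_norm_self v r).trans hr
  refine ⟨ρ, setIntegral_mono_on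
    (integrableOn_tailEnergy_integrand hab hG hh hw hσ (hmeas.indicator measurableSet_Ioi) hvσ')
    (integrableOn_tailEnergy_integrand hab hG (hh.comp (continuous_id.min continuous_const)) hw hσ
      hmeas hvσ) measurableSet_Ioc fun r hr => ?_⟩
  rw [hρ r (Ioc_subset_Icc_self hr)]
  refine mul_le_mul_of_nonneg_left (add_le_add_left ?_ _) (hw₀ r hr)
  obtain hrρ | hrρ := em (r ∈ Ioi ρ)
  · rw [indicator_of_mem hrρ]
  · rw [indicator_of_notMem hrρ]
    exact hG₀ _

end Cutoff

section Minimizers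

variable {n : ℕ} {R l σ : ℝ} {g h : ℝ → ℝ} {μ : ℝ → ℝ≥0∞}

theorem exists_slope_le_Fcon_of_antitone (hR : 0 ≤ R) (hg : ConvexOn ℝ univ fun z => g |z|)
    (hh : ConvexOn ℝ univ h) (hanti : Antitone h) (hl : ∀ x, 0 ≤ x → h 0 + -l * x ≤ h x)
    (hσ : 0 ≤ σ) (hgσ : ∀ s, σ ≤ s → g σ + l * R / (n + 1) * (s - σ) ≤ g s) :
    ∃ v, IsSelectionOn (slopeBounds σ μ) 0 R v ∧ ∀ u : RadW (n + 1) R, memWmu (n + 1) R μ u →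
      (tailEnergy 0 R (fun r => r ^ n) (fun z => g |z|) h v : EReal) ≤ Fcon (n + 1) R g h u := by
  obtain ⟨v, hv, hmin⟩ := exists_selection_tailEnergy_le hR hg hh (integrableOn_pow_Ioc n 0 R)
    (fun r hr => pow_nonneg hr.1.le n) hσ (isClosed_slopeBounds σ μ) (convex_slopeBounds σ μ)
    (fun _ _ => abs_le_of_mem_slopeBounds) ⟨0, isSelectionOn_zero hσ μ 0 R⟩
  refine ⟨v, hv, fun u hu => ?_⟩
  exact (EReal.coe_le_coe_iff.2 (hmin _ (RadW.isSelectionOn_truncSlope hu hσ))).trans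
    (coe_tailEnergy_truncSlope_le_Fcon hR hg hh hanti hl hσ hgσ u)

theorem exists_slope_le_Fcon_of_forall_le {c : ℝ} (hR : 0 ≤ R)
    (hg : ConvexOn ℝ univ fun z => g |z|) (hh : ConvexOn ℝ univ h) (hc₀ : 0 ≤ c)
    (hc : ∀ x, h c ≤ h x) (hl₀ : 0 ≤ l) (hl : ∀ x, 0 ≤ x → h 0 + -l * x ≤ h x)
    (hσ : 0 ≤ σ) (hgσ : ∀ s, σ ≤ s → g σ + l * R / (n + 1) * (s - σ) ≤ g s) :
    ∃ v, IsSelectionOn (slopeBounds σ μ) 0 R v ∧ ∀ u : RadW (n + 1) R, memWmu (n + 1) R μ u →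
      (tailEnergy 0 R (fun r => r ^ n) (fun z => g |z|) h v : EReal) ≤ Fcon (n + 1) R g h u := by
  have hanti := antitoneOn_Iic_of_convexOn_of_forall_le hh hc
  have hl' (x : ℝ) (hx : 0 ≤ x) : h (min 0 c) + -l * x ≤ h (min x c) := by
    have hmin := mul_le_mul_of_nonneg_left (min_le_left x c) hl₀
    rw [min_eq_left hc₀]
    linarith [hl (min x c) (le_min hx hc₀)]
  obtain ⟨v, hv, hle⟩ := exists_slope_le_Fcon_of_antitone (μ := μ) hR hg
    (convexOn_comp_min hh hanti) (antitone_comp_min hanti) hl' hσ hgσ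
  obtain ⟨ρ, hρ⟩ := exists_tailEnergy_indicator_le hR
    (continuousOn_univ.1 (hg.continuousOn isOpen_univ))
    (apply_zero_le_of_convexOn_of_even hg fun x => by simp only [abs_neg])
    (continuousOn_univ.1 (hh.continuousOn isOpen_univ)) (integrableOn_pow_Ioc n 0 R)
    (fun r hr => pow_nonneg hr.1.le n) hc₀ hv.aestronglyMeasurable
    (hv.ae_mem.mono fun _ hr => hr.1) hσ
  refine ⟨(Ioi ρ).indicator v, hv.indicator (zero_mem_slopeBounds hσ μ) measurableSet_Ioi,
    fun u hu => ?_⟩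
  refine ((EReal.coe_le_coe_iff.2 hρ).trans (hle u hu)).trans (RadW.Fcon_mono (fun x => ?_) u)
  obtain hx | hx := le_total x c
  · rw [min_eq_left hx]
  · rw [min_eq_right hx]
    exact hc x

theorem exists_radW_of_isSelectionOn {v : ℝ → ℝ} (hR : 0 ≤ R)
    (hg : Continuous fun z => g |z|) (hh : Continuous h) (hσ : 0 ≤ σ)
    (hv : IsSelectionOn (slopeBounds σ μ) 0 R v) :
    ∃ u : RadW (n + 1) R, memWmu (n + 1) R μ u ∧ Fcon (n + 1) R g h u
      = (tailEnergy 0 R (fun r => r ^ n) (fun z => g |z|) h v : EReal) := by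
  have hvσ : ∀ᵐ r ∂volume.restrict (Ioc 0 R), |v r| ≤ σ :=
    hv.ae_mem.mono fun _ => abs_le_of_mem_slopeBounds
  have hint : IntegrableOn v (Ioc 0 R) := Integrable.of_bound hv.aestronglyMeasurable σ hvσ
  have hweighted : IntegrableOn (fun r => r ^ n * |v r|) (Ioc 0 R) :=
    IntegrableOn.continuousOn_mul_of_subset (continuous_pow n).continuousOn hint.abs isCompact_Icc
      measurableSet_Ioc Ioc_subset_Icc_self
  refine ⟨RadW.ofSlope v hweighted, RadW.memWmu_ofSlope _ ?_, RadW.Fcon_ofSlope _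
    (integrableOn_tailEnergy_integrand hR hg hh (integrableOn_pow_Ioc n 0 R) hσ
      hv.aestronglyMeasurable hvσ)⟩
  filter_upwards [hv.ae_mem] with r hr
  rw [abs_of_nonneg hr.1.1]
  exact hr.2

theorem coe_mul_div_lt_of_coe_mul_lt {m l R : ℝ} {N : ℕ} {M : EReal} (hN : 1 ≤ N) (hR : 0 ≤ R)
    (hl : l ≤ m) (hm : ((m * R : ℝ) : EReal) < ((N : ℝ) : EReal) * M) :
    ((l * R / N : ℝ) : EReal) < M := by
  by_contra! hM
  have hN₀ : (N : ℝ) ≠ 0 := Nat.cast_ne_zero.2 (Nat.one_le_iff_ne_zero.1 hN)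
  have hmul := mul_le_mul_of_nonneg_left hM (EReal.coe_nonneg.2 N.cast_nonneg)
  rw [← EReal.coe_mul, mul_div_cancel₀ _ hN₀] at hmul
  exact (mul_le_mul_of_nonneg_right hl hR).not_gt (EReal.coe_lt_coe_iff.1 (hm.trans_le hmul))

theorem exists_minimizer_of_leftD_nonpos {N : ℕ} (hN : 1 ≤ N) (hR : 0 ≤ R)
    (hg : ConvexOn ℝ univ fun z => g |z|) (hh : ConvexOn ℝ univ h)
    (hhg : ((min |leftD h| |rightD h| * R : ℝ) : EReal) < ((N : ℝ) : EReal) * MconstE g)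
    (hleft : leftD h ≤ 0) :
    ∃ ubar : RadW N R, memWmu N R μ ubar ∧
      ∀ u : RadW N R, memWmu N R μ u → Fcon N R g h ubar ≤ Fcon N R g h u := by
  obtain ⟨n, rfl⟩ := Nat.exists_eq_add_of_le' hN
  set l := max (-rightD h) 0
  have hl₀ : 0 ≤ l := le_max_right _ _
  have hl (x : ℝ) (hx : 0 ≤ x) : h 0 + -l * x ≤ h x := by
    refine le_trans ?_ (apply_zero_add_rightD_mul_le hh hx)
    gcongr
    exact neg_le.1 (le_max_left _ _)
  have hl_le : l ≤ min |leftD h| |rightD h| :=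
    max_le (le_min ((neg_le_neg (leftD_le_rightD hh)).trans (neg_le_abs _)) (neg_le_abs _))
      (le_min (abs_nonneg _) (abs_nonneg _))
  obtain ⟨σ, hσ, hgσ⟩ := exists_pos_add_mul_sub_le_of_lt_mconstE hg
    (coe_mul_div_lt_of_coe_mul_lt hN hR hl_le hhg)
  rw [Nat.cast_succ] at hgσ
  obtain ⟨v, hv, hle⟩ : ∃ v, IsSelectionOn (slopeBounds σ μ) 0 R v ∧
      ∀ u : RadW (n + 1) R, memWmu (n + 1) R μ u →
        (tailEnergy 0 R (fun r => r ^ n) (fun z => g |z|) h v : EReal) ≤ Fcon (n + 1) R g h u := by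
    obtain hanti | ⟨c, hc₀, hc⟩ := antitone_or_exists_forall_le_of_convexOn hh
      fun x => apply_zero_le_of_leftD_nonpos hh hleft
    · exact exists_slope_le_Fcon_of_antitone hR hg hh hanti hl hσ.le hgσ
    · exact exists_slope_le_Fcon_of_forall_le hR hg hh hc₀ hc hl₀ hl hσ.le hgσ
  obtain ⟨ubar, hubar, heq⟩ := exists_radW_of_isSelectionOn (n := n) hR
    (continuousOn_univ.1 (hg.continuousOn isOpen_univ))
    (continuousOn_univ.1 (hh.continuousOn isOpen_univ)) hσ.le hv
  exact ⟨ubar, hubar, fun u hu => heq.trans_le (hle u hu)⟩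

end Minimizers

theorem constrained_exists_minimizer_general (N : ℕ) (hN : 1 ≤ N) (R : ℝ) (hR : 0 < R)
    (g h : ℝ → ℝ) (μ : ℝ → ℝ≥0∞)
    (hg1 : ConvexOn ℝ univ (fun z : ℝ => g |z|))
    (hh1 : ConvexOn ℝ univ h)
    (hhg : ((min |leftD h| |rightD h| * R : ℝ) : EReal) < ((N : ℝ) : EReal) * MconstE g) :
    ∃ ubar : RadW N R, memWmu N R μ ubar ∧
      ∀ u : RadW N R, memWmu N R μ u → Fcon N R g h ubar ≤ Fcon N R g h u := by
  obtain hleft | hleft := le_total (leftD h) 0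
  · exact exists_minimizer_of_leftD_nonpos hN hR.le hg1 hh1 hhg hleft
  have hleft_neg : leftD (fun x => h (-x)) ≤ 0 := by
    rw [leftD_comp_neg]
    exact neg_nonpos.2 (hleft.trans (leftD_le_rightD hh1))
  have hhg_neg : ((min |leftD fun x => h (-x)| |rightD fun x => h (-x)| * R : ℝ) : EReal)
      < ((N : ℝ) : EReal) * MconstE g := by
    rwa [leftD_comp_neg, rightD_comp_neg, abs_neg, abs_neg, min_comm]
  obtain ⟨ubar, hubar, hmin⟩ := exists_minimizer_of_leftD_nonpos (μ := μ) hN hR.le hg1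
    (convexOn_comp_neg hh1) hhg_neg hleft_neg
  refine ⟨ubar.neg, RadW.memWmu_neg hubar, fun u hu => ?_⟩
  rw [RadW.Fcon_neg]
  refine (hmin u.neg (RadW.memWmu_neg hu)).trans_eq ?_
  simp only [RadW.Fcon_neg, neg_neg]

/-- under (g1), (g2), (h1) and (hg), the constrained radial functional `F`
attains its minimum on `𝒲_μ`. (The condition (hg) `min{|h'₋(0)|,|h'₊(0)|} < N M / R` is
written in the equivalent form `min{|h'₋(0)|,|h'₊(0)|} · R < N · M`, valid also when
`M = +∞`.) -/
theorem constrained_exists_minimizer (N : ℕ) (hN : 1 ≤ N) (R : ℝ) (hR : 0 < R)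
    (g h : ℝ → ℝ) (μ : ℝ → ℝ≥0∞)
    (hg1 : ConvexOn ℝ univ (fun z : ℝ => g |z|))
    (hg2 : 0 < MconstE g)
    (hh1 : ConvexOn ℝ univ h)
    (hhg : ((min |leftD h| |rightD h| * R : ℝ) : EReal) < ((N : ℝ) : EReal) * MconstE g)
    (hμmono : MonotoneOn μ (Icc 0 R)) (hμpos : ∀ r ∈ Icc (0:ℝ) R, 0 < μ r) :
    ∃ ubar : RadW N R, memWmu N R μ ubar ∧
      ∀ u : RadW N R, memWmu N R μ u → Fcon N R g h ubar ≤ Fcon N R g h u := by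
  exact constrained_exists_minimizer_general N hN R hR g h μ hg1 hh1 hhg
end
end

section
/- Let N ≥ 1 be an integer, R > 0, L ≥ 0, and let w : [0,R] → ℝ be L-Lipschitz. Define ū(r) := min_{s ∈ [r,R]} w(s). Then ū is L-Lipschitz, nondecreasing, ū(r) ≤ w(r) for all r, ū(R) = w(R), and for every nondecreasing g : [0,∞) → [0,+∞] and every nondecreasing k : ℝ → ℝ one has ∫₀^R r^{N−1}[g(|ū′(r)|) + k(ū(r))] dr ≤ ∫₀^R r^{N−1}[g(|w′(r)|) + k(w(r))] dr. -/
open MeasureTheory Set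
open scoped ENNReal

noncomputable section

/-!
Every value of `ū` is attained by `w` further to the right, so `ū` inherits the Lipschitz constant
of `w`. Where `ū < w`, the minimum over `[r, R]` is not attained near `r`, so `ū` is locally
constant and `ū' = 0`. Where `ū = w`, the function `w - ū ≥ 0` has an interior minimum, so
`ū' = w'` if both derivatives exist. Hence `|ū'| ≤ |w'|` almost everywhere, and together with
`ū ≤ w` this compares the two integrands pointwise.
-/

open Filter
open scoped NNReal Topology

section Calculus

theorem deriv_eq_of_eventuallyLE_of_eq {f g : ℝ → ℝ} {x : ℝ} (hf : DifferentiableAt ℝ f x)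
    (hg : DifferentiableAt ℝ g x) (hle : f ≤ᶠ[𝓝 x] g) (heq : f x = g x) :
    deriv f x = deriv g x := by
  have hmin : IsLocalMin (fun y => g y - f y) x := by
    filter_upwards [hle] with y hy
    rw [heq, sub_self]
    exact sub_nonneg.2 hy
  have hzero : deriv g x - deriv f x = 0 := by
    rw [← deriv_fun_sub hg hf]
    exact hmin.deriv_eq_zero
  exact (sub_eq_zero.1 hzero).symm

variable {X : Type*} [TopologicalSpace X] [T2Space X] [MeasurableSpace X] [OpensMeasurableSpace X]
  {μ : Measure X} {s : Set X} {ρ : X → ℝ} {k : ℝ → ℝ}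

theorem integrableOn_mul_monotone_comp {f : X → ℝ} (hs : IsCompact s) (hρ : IntegrableOn ρ s μ)
    (hk : Monotone k) (hf : ContinuousOn f s) :
    IntegrableOn (fun x => ρ x * k (f x)) s μ := by
  have hmeas : AEStronglyMeasurable (fun x => k (f x)) (μ.restrict s) :=
    (hk.measurable.comp_aemeasurable (hf.aemeasurable hs.measurableSet)).aestronglyMeasurable
  have himage : IsCompact (f '' s) := hs.image_of_continuousOn hf
  obtain ⟨c, hc⟩ := himage.bddBelow
  obtain ⟨d, hd⟩ := himage.bddAbove
  refine Integrable.mul_bdd (c := max |k c| |k d|) hρ hmeas ?_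
  filter_upwards [ae_restrict_mem hs.measurableSet] with x hx
  have hfx : f x ∈ f '' s := mem_image_of_mem f hx
  exact abs_le_max_abs_abs (hk (hc hfx)) (hk (hd hfx))

theorem setIntegral_mul_monotone_comp_mono {f₁ f₂ : X → ℝ} (hs : IsCompact s)
    (hρ : IntegrableOn ρ s μ) (hρ_nonneg : ∀ x ∈ s, 0 ≤ ρ x) (hk : Monotone k)
    (hf₁ : ContinuousOn f₁ s) (hf₂ : ContinuousOn f₂ s) (hle : ∀ x ∈ s, f₁ x ≤ f₂ x) :
    ∫ x in s, ρ x * k (f₁ x) ∂μ ≤ ∫ x in s, ρ x * k (f₂ x) ∂μ :=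
  setIntegral_mono_on (integrableOn_mul_monotone_comp hs hρ hk hf₁)
    (integrableOn_mul_monotone_comp hs hρ hk hf₂) hs.measurableSet
    fun x hx => mul_le_mul_of_nonneg_left (hk (hle x hx)) (hρ_nonneg x hx)

end Calculus

/-- `u` is the monotone rearrangement of `w` on `[a, b]`: for `r ∈ [a, b]`, the value `u r` is the
minimum of `w` over the tail `[r, b]`, required to be attained. Nothing is said about `u` off
`[a, b]`. -/
def IsTailMinOn {α β : Type*} [Preorder α] [Preorder β] (u w : α → β) (a b : α) : Prop :=
  ∀ r ∈ Icc a b, IsLeast (w '' Icc r b) (u r)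

namespace IsTailMinOn

section Order

theorem of_eq_sInf {α β : Type*} [Preorder α] [TopologicalSpace α] [CompactIccSpace α]
    [ConditionallyCompleteLinearOrder β] [TopologicalSpace β] [ClosedIicTopology β]
    {u w : α → β} {a b : α} (hw : ContinuousOn w (Icc a b))
    (hu : ∀ r ∈ Icc a b, u r = sInf (w '' Icc r b)) : IsTailMinOn u w a b := by
  intro r hr
  rw [hu r hr]
  have hcompact : IsCompact (w '' Icc r b) :=
    isCompact_Icc.image_of_continuousOn (hw.mono (Icc_subset_Icc_left hr.1))
  exact hcompact.isLeast_sInf ((nonempty_Icc.2 hr.2).image w)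

section Preorder

variable {α β : Type*} [Preorder α] [Preorder β] {u w : α → β} {a b r t : α}

theorem le_of_mem_Icc (h : IsTailMinOn u w a b) (hr : r ∈ Icc a b) (ht : t ∈ Icc r b) :
    u r ≤ w t :=
  (h r hr).2 (mem_image_of_mem w ht)

theorem le_self (h : IsTailMinOn u w a b) (hr : r ∈ Icc a b) : u r ≤ w r :=
  h.le_of_mem_Icc hr (left_mem_Icc.2 hr.2)

theorem monotoneOn (h : IsTailMinOn u w a b) : MonotoneOn u (Icc a b) :=
  fun r hr s hs hrs => (h s hs).mono (h r hr) (image_mono (Icc_subset_Icc_left hrs))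

end Preorder

theorem right_eq {α β : Type*} [PartialOrder α] [Preorder β] {u w : α → β} {a b : α}
    (h : IsTailMinOn u w a b) (hab : a ≤ b) : u b = w b := by
  obtain ⟨t, ht, htb⟩ := (h b (right_mem_Icc.2 hab)).1
  rw [← htb, le_antisymm ht.2 ht.1]

variable {α β : Type*} [LinearOrder α] {u w : α → β} {a b r s : α}

theorem eq_of_forall_lt [PartialOrder β] (h : IsTailMinOn u w a b) (hr : r ∈ Icc a b)
    (hs : s ∈ Icc a b) (hrs : r ≤ s) (hlt : ∀ t ∈ Ico r s, u r < w t) : u s = u r := by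
  obtain ⟨t, ht, htr⟩ := (h r hr).1
  have hst : s ≤ t := by
    by_contra! hts
    exact (hlt t ⟨ht.1, hts⟩).ne' htr
  exact le_antisymm (htr ▸ h.le_of_mem_Icc hs ⟨hst, ht.2⟩) (h.monotoneOn hr hs hrs)

theorem eventuallyEq_const [TopologicalSpace α] [OrderTopology α] [LinearOrder β]
    [TopologicalSpace β] [ClosedIicTopology β]
    (h : IsTailMinOn u w a b) (hr : r ∈ Ioo a b) (hw : ContinuousAt w r) (hlt : u r < w r) :
    u =ᶠ[𝓝 r] fun _ => u r := by
  have hrI : r ∈ Icc a b := Ioo_subset_Icc_self hr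
  have hnear : ∀ᶠ s in 𝓝 r, ∀ t ∈ uIcc r s, u r < w t :=
    (tendsto_const_nhds.uIcc tendsto_id).eventually
      (eventually_smallSets_forall.2 (hw.eventually (Ioi_mem_nhds hlt)))
  filter_upwards [hnear, Icc_mem_nhds hr.1 hr.2] with s hs hsI
  rcases le_total r s with hrs | hsr
  · exact h.eq_of_forall_lt hrI hsI hrs fun t ht =>
      hs t (Icc_subset_uIcc (Ico_subset_Icc_self ht))
  · exact (h.eq_of_forall_lt hsI hrI hsr fun t ht => (h.monotoneOn hsI hrI hsr).trans_lt
      (hs t (Icc_subset_uIcc' (Ico_subset_Icc_self ht)))).symm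

end Order

section Real

variable {u w : ℝ → ℝ} {a b : ℝ}

theorem lipschitzOnWith {K : ℝ≥0} (h : IsTailMinOn u w a b)
    (hw : LipschitzOnWith K w (Icc a b)) : LipschitzOnWith K u (Icc a b) := by
  refine LipschitzOnWith.of_le_add_mul K fun s hs r hr => ?_
  obtain ⟨t, ht, htr⟩ := (h r hr).1
  have htI : t ∈ Icc a b := ⟨hr.1.trans ht.1, ht.2⟩
  have hmaxI : max s t ∈ Icc a b := ⟨le_max_of_le_left hs.1, max_le hs.2 ht.2⟩
  have hdist : dist (max s t) t ≤ dist s r := by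
    simpa only [max_eq_right ht.1, Real.dist_eq] using abs_max_sub_max_le_abs s r t
  calc u s ≤ w (max s t) := h.le_of_mem_Icc hs ⟨le_max_left s t, hmaxI.2⟩
    _ ≤ w t + K * dist (max s t) t := hw.le_add_mul hmaxI htI
    _ ≤ u r + K * dist s r := by rw [htr]; gcongr

theorem abs_deriv_le {r : ℝ} (h : IsTailMinOn u w a b) (hr : r ∈ Ioo a b)
    (hw : DifferentiableAt ℝ w r) : |deriv u r| ≤ |deriv w r| := by
  rcases (h.le_self (Ioo_subset_Icc_self hr)).eq_or_lt with heq | hlt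
  · by_cases hu : DifferentiableAt ℝ u r
    · have hle : u ≤ᶠ[𝓝 r] w := by
        filter_upwards [Icc_mem_nhds hr.1 hr.2] with x hx using h.le_self hx
      rw [deriv_eq_of_eventuallyLE_of_eq hu hw hle heq]
    · rw [deriv_zero_of_not_differentiableAt hu, abs_zero]
      exact abs_nonneg _
  · rw [(h.eventuallyEq_const hr hw.continuousAt hlt).deriv_eq, deriv_const, abs_zero]
    exact abs_nonneg _

theorem ae_abs_deriv_le (h : IsTailMinOn u w a b) (hw : LocallyBoundedVariationOn w (Icc a b)) :
    ∀ᵐ r ∂volume.restrict (Ioc a b), |deriv u r| ≤ |deriv w r| := by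
  rw [← restrict_Ioo_eq_restrict_Ioc]
  filter_upwards [ae_restrict_of_ae hw.ae_differentiableWithinAt_of_mem,
    ae_restrict_mem measurableSet_Ioo] with r hdiff hr
  exact h.abs_deriv_le hr
    ((hdiff (Ioo_subset_Icc_self hr)).differentiableAt (Icc_mem_nhds hr.1 hr.2))

theorem lintegral_comp_abs_deriv_le (h : IsTailMinOn u w a b)
    (hw : LocallyBoundedVariationOn w (Icc a b)) (ρ : ℝ → ℝ≥0∞) {g : ℝ → ℝ≥0∞}
    (hg : MonotoneOn g (Ici 0)) :
    ∫⁻ r in Ioc a b, ρ r * g |deriv u r| ≤ ∫⁻ r in Ioc a b, ρ r * g |deriv w r| := by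
  refine lintegral_mono_ae ?_
  filter_upwards [h.ae_abs_deriv_le hw] with r hr
  gcongr
  exact hg (mem_Ici.2 (abs_nonneg _)) (mem_Ici.2 (abs_nonneg _)) hr

theorem setIntegral_comp_le (h : IsTailMinOn u w a b) (hu : ContinuousOn u (Icc a b))
    (hw : ContinuousOn w (Icc a b)) {ρ : ℝ → ℝ} (hρ : IntegrableOn ρ (Icc a b))
    (hρ_nonneg : ∀ r ∈ Icc a b, 0 ≤ ρ r) {k : ℝ → ℝ} (hk : Monotone k) :
    ∫ r in Ioc a b, ρ r * k (u r) ≤ ∫ r in Ioc a b, ρ r * k (w r) := by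
  rw [← integral_Icc_eq_integral_Ioc, ← integral_Icc_eq_integral_Ioc]
  exact setIntegral_mul_monotone_comp_mono isCompact_Icc hρ hρ_nonneg hk hu hw
    fun _ => h.le_self

end Real

end IsTailMinOn

theorem rising_sun_rearrangement_general {a b : ℝ} (hab : a ≤ b) {K : ℝ≥0} {u w : ℝ → ℝ}
    (hw : LipschitzOnWith K w (Icc a b)) (hu : ∀ r ∈ Icc a b, u r = sInf (w '' Icc r b)) :
    LipschitzOnWith K u (Icc a b) ∧
    MonotoneOn u (Icc a b) ∧
    (∀ r ∈ Icc a b, u r ≤ w r) ∧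
    u b = w b ∧
    ∀ ρ : ℝ → ℝ, IntegrableOn ρ (Icc a b) → (∀ r ∈ Icc a b, 0 ≤ ρ r) →
      ∀ g : ℝ → ℝ≥0∞, MonotoneOn g (Ici 0) →
      ∀ k : ℝ → ℝ, Monotone k →
      ((∫⁻ r in Ioc a b, ENNReal.ofReal (ρ r) * g |deriv u r| : ℝ≥0∞) : EReal)
          + ((∫ r in Ioc a b, ρ r * k (u r) : ℝ) : EReal)
        ≤ ((∫⁻ r in Ioc a b, ENNReal.ofReal (ρ r) * g |deriv w r| : ℝ≥0∞) : EReal)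
          + ((∫ r in Ioc a b, ρ r * k (w r) : ℝ) : EReal) := by
  have h : IsTailMinOn u w a b := .of_eq_sInf hw.continuousOn hu
  have hu_lip : LipschitzOnWith K u (Icc a b) := h.lipschitzOnWith hw
  refine ⟨hu_lip, h.monotoneOn, fun _ => h.le_self, h.right_eq hab,
    fun ρ hρ hρ_nonneg g hg k hk => add_le_add ?_ ?_⟩
  · exact EReal.coe_ennreal_le_coe_ennreal_iff.2
      (h.lintegral_comp_abs_deriv_le hw.locallyBoundedVariationOn _ hg)
  · exact EReal.coe_le_coe_iff.2
      (h.setIntegral_comp_le hu_lip.continuousOn hw.continuousOn hρ hρ_nonneg hk)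

/-- monotone rearrangement via the Rising Sun Lemma. If `w : [0,R] → ℝ` is
`L`-Lipschitz and `ū(r) := min_{[r,R]} w`, then `ū` is `L`-Lipschitz, nondecreasing,
`ū ≤ w`, `ū(R) = w(R)`, and for every nondecreasing `g : [0,∞) → [0,+∞]` and
nondecreasing `k : ℝ → ℝ`,
`∫₀^R r^(N-1)[g(|ū'|) + k(ū)] dr ≤ ∫₀^R r^(N-1)[g(|w'|) + k(w)] dr`. -/
theorem rising_sun_rearrangement (N : ℕ) (hN : 1 ≤ N) (R L : ℝ) (hR : 0 < R) (hL : 0 ≤ L)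
    (w : ℝ → ℝ) (hw : LipschitzOnWith (Real.toNNReal L) w (Icc 0 R))
    (ubar : ℝ → ℝ) (hub : ∀ r ∈ Icc (0:ℝ) R, ubar r = sInf (w '' Icc r R)) :
    LipschitzOnWith (Real.toNNReal L) ubar (Icc 0 R) ∧
    MonotoneOn ubar (Icc 0 R) ∧
    (∀ r ∈ Icc (0:ℝ) R, ubar r ≤ w r) ∧
    ubar R = w R ∧
    ∀ g : ℝ → ℝ≥0∞, (∀ a b : ℝ, 0 ≤ a → a ≤ b → g a ≤ g b) →
      ∀ k : ℝ → ℝ, Monotone k →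
      ((∫⁻ r in Ioc (0:ℝ) R, ENNReal.ofReal (r ^ (N - 1)) * g |deriv ubar r| : ℝ≥0∞) : EReal)
          + ((∫ r in Ioc (0:ℝ) R, r ^ (N - 1) * k (ubar r) : ℝ) : EReal)
        ≤ ((∫⁻ r in Ioc (0:ℝ) R, ENNReal.ofReal (r ^ (N - 1)) * g |deriv w r| : ℝ≥0∞) : EReal)
          + ((∫ r in Ioc (0:ℝ) R, r ^ (N - 1) * k (w r) : ℝ) : EReal) := by
  obtain ⟨hlip, hmono, hle, hright, henergy⟩ := rising_sun_rearrangement_general hR.le hw hub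
  exact ⟨hlip, hmono, hle, hright, fun g hg k hk =>
    henergy _ (continuous_pow (N - 1)).integrableOn_Icc (fun _ hr => pow_nonneg hr.1 _) g
      (fun x hx y _ hxy => hg x y hx hxy) k hk⟩
end
end

section
/- Let N ≥ 1 be an integer, R > 0, let q : [0,R] → [0,∞) be nondecreasing, and let p be absolutely continuous on [0,R] with p(0) = 0 and p′(r) = r^{N−1} q(r) for a.e. r ∈ [0,R]. Then: (a) for every δ ∈ (0,1], the function r ↦ r^{1−N−δ} p(r) is nondecreasing on (0,R]; (b) the function r ↦ r^{1−N} p(r) is nondecreasing on (0,R], and it is strictly increasing on (r₀,R] whenever r₀ ∈ [0,R) is such that q(r) > 0 for all r ∈ (r₀,R]. -/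
open MeasureTheory Set
open scoped ENNReal

noncomputable section

/-!
Substituting `ρ = r t` gives `∫₀^r ρ^α q(ρ) dρ = r^(α+1) ∫₀¹ t^α q(r t) dt`. The last integral is
nonnegative and nondecreasing in `r` because `q` is, so after division by `r^s` it is multiplied by
`r^(α+1-s)`, which is nondecreasing for `s ≤ α + 1` and strictly increasing for `s < α + 1`.
-/

lemma integrableOn_mul_of_monotoneOn {X : Type*} [TopologicalSpace X] [MeasurableSpace X]
    [BorelSpace X] [LinearOrder X] [OrderClosedTopology X] {μ : Measure X} {s : Set X}
    {w q : X → ℝ} (hs : MeasurableSet s) (hw : IntegrableOn w s μ) (hq : MonotoneOn q s)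
    (hbelow : BddBelow (q '' s)) (habove : BddAbove (q '' s)) :
    IntegrableOn (fun x ↦ w x * q x) s μ := by
  obtain ⟨C, hC⟩ := (isBounded_iff_bddBelow_bddAbove.mpr ⟨hbelow, habove⟩).exists_norm_le
  refine hw.mul_bdd (c := C) (aemeasurable_restrict_of_monotoneOn hs hq).aestronglyMeasurable ?_
  filter_upwards [ae_restrict_mem hs] with x hx
  exact hC _ (mem_image_of_mem q hx)

/-- The integral `∫₀¹ w(t) q(r t) dt` of the dilates of `q` against a weight `w` on `(0, 1]`. For
`w t = t ^ α` it is the momentum `∫₀^r ρ^α q(ρ) dρ` with its scaling factor `r^(α+1)` removed. -/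
def dilationIntegral (w q : ℝ → ℝ) (r : ℝ) : ℝ :=
  ∫ t in Ioc (0 : ℝ) 1, w t * q (r * t)

lemma setIntegral_rpow_mul_eq_rpow_mul_dilationIntegral (α : ℝ) (q : ℝ → ℝ) {r : ℝ} (hr : 0 < r) :
    ∫ ρ in Ioc (0 : ℝ) r, ρ ^ α * q ρ = r ^ (α + 1) * dilationIntegral (fun t ↦ t ^ α) q r := by
  have hsubst : ∫ ρ in Ioc (0 : ℝ) r, ρ ^ α * q ρ =
      r * ∫ t in Ioc (0 : ℝ) 1, (r * t) ^ α * q (r * t) := by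
    simpa [intervalIntegral.integral_of_le, hr.le] using
      (intervalIntegral.mul_integral_comp_mul_left (a := 0) (b := 1)
        (f := fun ρ : ℝ ↦ ρ ^ α * q ρ) (c := r)).symm
  have hfactor : ∫ t in Ioc (0 : ℝ) 1, (r * t) ^ α * q (r * t) =
      r ^ α * dilationIntegral (fun t ↦ t ^ α) q r := by
    rw [dilationIntegral, ← integral_const_mul]
    refine setIntegral_congr_fun measurableSet_Ioc fun t ht ↦ ?_
    simp only [Real.mul_rpow hr.le ht.1.le, mul_assoc]
  rw [hsubst, hfactor, Real.rpow_add_one hr.ne', ← mul_assoc, mul_comm r]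

lemma setIntegral_rpow_mul_div_rpow (α s : ℝ) (q : ℝ → ℝ) {r : ℝ} (hr : 0 < r) :
    (∫ ρ in Ioc (0 : ℝ) r, ρ ^ α * q ρ) / r ^ s =
      r ^ (α + 1 - s) * dilationIntegral (fun t ↦ t ^ α) q r := by
  rw [setIntegral_rpow_mul_eq_rpow_mul_dilationIntegral α q hr, mul_div_right_comm,
    ← Real.rpow_sub hr]

lemma mul_mem_Ioc_of_mem_Ioc {R r t : ℝ} (hr : r ∈ Ioc 0 R) (ht : t ∈ Ioc (0 : ℝ) 1) :
    r * t ∈ Ioc 0 R :=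
  ⟨mul_pos hr.1 ht.1, (mul_le_of_le_one_right hr.1.le ht.2).trans hr.2⟩

section DilationIntegral

variable {w q : ℝ → ℝ} {R : ℝ}

lemma dilationIntegral_nonneg (hw0 : ∀ t ∈ Ioc (0 : ℝ) 1, 0 ≤ w t)
    (hq0 : ∀ r ∈ Ioc 0 R, 0 ≤ q r) {r : ℝ} (hr : r ∈ Ioc 0 R) : 0 ≤ dilationIntegral w q r :=
  setIntegral_nonneg measurableSet_Ioc fun t ht ↦
    mul_nonneg (hw0 t ht) (hq0 _ (mul_mem_Ioc_of_mem_Ioc hr ht))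

lemma integrableOn_mul_comp_mul_left (hw : IntegrableOn w (Ioc 0 1))
    (hq : MonotoneOn q (Ioc 0 R)) (hq0 : ∀ r ∈ Ioc 0 R, 0 ≤ q r) {r : ℝ} (hr : r ∈ Ioc 0 R) :
    IntegrableOn (fun t ↦ w t * q (r * t)) (Ioc 0 1) := by
  have hmono : MonotoneOn (fun t ↦ q (r * t)) (Ioc 0 1) := fun t ht u hu htu ↦
    hq (mul_mem_Ioc_of_mem_Ioc hr ht) (mul_mem_Ioc_of_mem_Ioc hr hu)
      (mul_le_mul_of_nonneg_left htu hr.1.le)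
  refine integrableOn_mul_of_monotoneOn measurableSet_Ioc hw hmono ⟨0, ?_⟩
    (hmono.map_bddAbove subset_rfl ⟨1, fun _ ht ↦ ht.2, right_mem_Ioc.mpr one_pos⟩)
  rintro _ ⟨t, ht, rfl⟩
  exact hq0 _ (mul_mem_Ioc_of_mem_Ioc hr ht)

lemma monotoneOn_dilationIntegral (hw : IntegrableOn w (Ioc 0 1))
    (hw0 : ∀ t ∈ Ioc (0 : ℝ) 1, 0 ≤ w t) (hq : MonotoneOn q (Ioc 0 R))
    (hq0 : ∀ r ∈ Ioc 0 R, 0 ≤ q r) : MonotoneOn (dilationIntegral w q) (Ioc 0 R) := by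
  intro r hr s hs hrs
  refine setIntegral_mono_on (integrableOn_mul_comp_mul_left hw hq hq0 hr)
    (integrableOn_mul_comp_mul_left hw hq hq0 hs) measurableSet_Ioc fun t ht ↦ ?_
  exact mul_le_mul_of_nonneg_left (hq (mul_mem_Ioc_of_mem_Ioc hr ht)
    (mul_mem_Ioc_of_mem_Ioc hs ht) (mul_le_mul_of_nonneg_right hrs ht.1.le)) (hw0 t ht)

lemma dilationIntegral_pos (hw : IntegrableOn w (Ioc 0 1))
    (hw0 : ∀ t ∈ Ioc (0 : ℝ) 1, 0 < w t) (hq : MonotoneOn q (Ioc 0 R))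
    (hq0 : ∀ r ∈ Ioc 0 R, 0 ≤ q r) {r₀ r : ℝ} (hr₀ : 0 ≤ r₀) (hqpos : ∀ ρ ∈ Ioc r₀ R, 0 < q ρ)
    (hr : r ∈ Ioc r₀ R) : 0 < dilationIntegral w q r := by
  have hr' : r ∈ Ioc 0 R := Ioc_subset_Ioc_left hr₀ hr
  have hnonneg : 0 ≤ᵐ[volume.restrict (Ioc 0 1)] fun t ↦ w t * q (r * t) := by
    filter_upwards [ae_restrict_mem measurableSet_Ioc] with t ht
    exact mul_nonneg (hw0 t ht).le (hq0 _ (mul_mem_Ioc_of_mem_Ioc hr' ht))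
  have hsupport : Ioc (r₀ / r) 1 ⊆ Function.support (fun t ↦ w t * q (r * t)) ∩ Ioc 0 1 := by
    intro t ht
    have ht' : t ∈ Ioc (0 : ℝ) 1 := Ioc_subset_Ioc_left (div_nonneg hr₀ hr'.1.le) ht
    have hrt : r * t ∈ Ioc r₀ R :=
      ⟨(div_lt_iff₀' hr'.1).mp ht.1, (mul_mem_Ioc_of_mem_Ioc hr' ht').2⟩
    exact ⟨(mul_pos (hw0 t ht') (hqpos _ hrt)).ne', ht'⟩
  refine (setIntegral_pos_iff_support_of_nonneg_ae hnonneg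
    (integrableOn_mul_comp_mul_left hw hq hq0 hr')).mpr (lt_of_lt_of_le ?_ (measure_mono hsupport))
  simpa [Real.volume_Ioc] using (div_lt_one hr'.1).mpr hr.1

end DilationIntegral

theorem momentum_monotonicity_general {α : ℝ} (hα : -1 < α) {R : ℝ} {q : ℝ → ℝ}
    (hq : MonotoneOn q (Ioc 0 R)) (hq0 : ∀ r ∈ Ioc 0 R, 0 ≤ q r) {p : ℝ → ℝ}
    (hp : ∀ r ∈ Ioc 0 R, p r = ∫ ρ in Ioc (0 : ℝ) r, ρ ^ α * q ρ) :
    (∀ s ≤ α + 1, MonotoneOn (fun r ↦ p r / r ^ s) (Ioc 0 R)) ∧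
    (∀ s < α + 1, ∀ r₀, 0 ≤ r₀ → (∀ r ∈ Ioc r₀ R, 0 < q r) →
      StrictMonoOn (fun r ↦ p r / r ^ s) (Ioc r₀ R)) := by
  have hw : IntegrableOn (fun t : ℝ ↦ t ^ α) (Ioc 0 1) :=
    (intervalIntegral.intervalIntegrable_rpow' hα).1
  have hwpos : ∀ t ∈ Ioc (0 : ℝ) 1, 0 < t ^ α := fun t ht ↦ Real.rpow_pos_of_pos ht.1 α
  have hwnonneg : ∀ t ∈ Ioc (0 : ℝ) 1, 0 ≤ t ^ α := fun t ht ↦ (hwpos t ht).le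
  have hmono := monotoneOn_dilationIntegral hw hwnonneg hq hq0
  have hdiv : ∀ s, ∀ r ∈ Ioc 0 R,
      p r / r ^ s = r ^ (α + 1 - s) * dilationIntegral (fun t ↦ t ^ α) q r := fun s r hr ↦ by
    rw [hp r hr, setIntegral_rpow_mul_div_rpow α s q hr.1]
  refine ⟨fun s hs r hr r' hr' hrr' ↦ ?_, fun s hs r₀ hr₀ hqpos r hr r' hr' hrr' ↦ ?_⟩
  · simp only [hdiv s r hr, hdiv s r' hr']
    exact mul_le_mul (Real.rpow_le_rpow hr.1.le hrr' (sub_nonneg.mpr hs)) (hmono hr hr' hrr')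
      (dilationIntegral_nonneg hwnonneg hq0 hr) (Real.rpow_nonneg hr'.1.le _)
  · have hr0 : r ∈ Ioc 0 R := Ioc_subset_Ioc_left hr₀ hr
    have hr0' : r' ∈ Ioc 0 R := Ioc_subset_Ioc_left hr₀ hr'
    simp only [hdiv s r hr0, hdiv s r' hr0']
    exact mul_lt_mul (Real.rpow_lt_rpow hr0.1.le hrr' (sub_pos.mpr hs)) (hmono hr0 hr0' hrr'.le)
      (dilationIntegral_pos hw hwpos hq hq0 hr₀ hqpos hr) (Real.rpow_nonneg hr0'.1.le _)

/-- monotonicity of the momentum. If `q : [0,R] → [0,∞)` is nondecreasing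
and `p(r) = ∫₀^r ρ^(N-1) q(ρ) dρ` (that is, `p` is absolutely continuous, `p(0) = 0`,
`p' = r^(N-1) q` a.e.), then (a) `r ↦ r^(1-N-δ) p(r)` is nondecreasing on `(0,R]` for
every `δ ∈ (0,1]`, and (b) `r ↦ r^(1-N) p(r)` is nondecreasing on `(0,R]` and strictly
increasing on `(r₀,R]` whenever `q > 0` on `(r₀,R]`. -/
theorem momentum_monotonicity (N : ℕ) (hN : 1 ≤ N) (R : ℝ) (hR : 0 < R)
    (q : ℝ → ℝ) (hqmono : MonotoneOn q (Icc 0 R)) (hqpos : ∀ r ∈ Icc (0:ℝ) R, 0 ≤ q r)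
    (p : ℝ → ℝ) (hp : ∀ r ∈ Icc (0:ℝ) R, p r = ∫ ρ in Ioc (0:ℝ) r, ρ ^ (N - 1) * q ρ) :
    (∀ δ : ℝ, 0 < δ → δ ≤ 1 →
      MonotoneOn (fun r : ℝ => p r / r ^ ((N : ℝ) - 1 + δ)) (Ioc 0 R)) ∧
    MonotoneOn (fun r : ℝ => p r / r ^ (N - 1)) (Ioc 0 R) ∧
    (∀ r₀ ∈ Ico (0:ℝ) R, (∀ r ∈ Ioc r₀ R, 0 < q r) →
      StrictMonoOn (fun r : ℝ => p r / r ^ (N - 1)) (Ioc r₀ R)) := by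
  have hpow (x : ℝ) : x ^ ((N : ℝ) - 1) = x ^ (N - 1) := by
    rw [← Nat.cast_pred hN, Real.rpow_natCast]
  have hα : (-1 : ℝ) < N - 1 := by rify at hN; linarith
  obtain ⟨hmono, hstrict⟩ := momentum_monotonicity_general hα
    (hqmono.mono Ioc_subset_Icc_self) (fun r hr ↦ hqpos r (Ioc_subset_Icc_self hr)) (p := p)
    (by simpa only [hpow] using fun r hr ↦ hp r (Ioc_subset_Icc_self hr))
  refine ⟨fun δ _ hδ ↦ hmono _ (by gcongr), ?_, fun r₀ hr₀ hq ↦ ?_⟩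
  · simpa only [hpow] using hmono (N - 1) (by simp)
  · simpa only [hpow] using hstrict (N - 1) (by simp) r₀ hr₀.1 hq
end
end
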